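/- arXiv:2009.00573 — 3 statements merged into one kernel-verified Lean document; each statement's English description precedes it below -/
import Mathlib

section
/- Let d ≥ 1 and let β : ℝ → ℝ be smooth with β(0) = 0, satisfying the growth condition |d^n/dt^n (β(t²)t)| ≤ C_n t^{p−n} for all t ≥ 1 and all n ≥ 0, for some p < d* (where d* = ∞ for d = 1,2 and d* = (d+2)/(d−2) for d ≥ 3). Let B : ℝ → ℝ be the primitive of β with B(0) = 0 and assume B(t) ≥ 0 for all t ≥ 0. Then the zero solution of the NLS is orbitally stable: for every ε > 0 there exists δ > 0 such that every classical solution u of i∂_t u = −Δu + β(|u|²)u on [0,∞) × ℝ^d with ‖u(0,·)‖_{H¹} < δ satisfies sup_{t ≥ 0} ‖u(t,·)‖_{H¹} < ε. -/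
open MeasureTheory

/-- The Laplacian of a function on `ℝ^d`, as a sum of second partial derivatives. -/
noncomputable def lap {d : ℕ} {F : Type*} [NormedAddCommGroup F] [NormedSpace ℝ F]
    (f : EuclideanSpace ℝ (Fin d) → F) (x : EuclideanSpace ℝ (Fin d)) : F :=
  ∑ i : Fin d,
    fderiv ℝ (fun y => fderiv ℝ f y (EuclideanSpace.single i 1)) x (EuclideanSpace.single i 1)

/-- The `H¹` norm: `‖g‖_{H¹}² = ∫ (|g|² + |∇g|²)`. -/
noncomputable def H1norm {d : ℕ} (g : EuclideanSpace ℝ (Fin d) → ℂ) : ℝ :=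
  Real.sqrt (∫ x : EuclideanSpace ℝ (Fin d),
    (‖g x‖ ^ 2 + ∑ i : Fin d, ‖fderiv ℝ g x (EuclideanSpace.single i 1)‖ ^ 2))

/-- A classical solution of the NLS `i ∂_t u = -Δu + β(|u|²)u` on `[0,∞) × ℝ^d`. -/
structure IsClassicalSolution {d : ℕ} (β : ℝ → ℝ)
    (u : ℝ → EuclideanSpace ℝ (Fin d) → ℂ) : Prop where
  smooth : ContDiff ℝ (⊤ : ℕ∞) (fun p : ℝ × EuclideanSpace ℝ (Fin d) => u p.1 p.2)
  eqn : ∀ t : ℝ, 0 ≤ t → ∀ x, Complex.I * deriv (fun s => u s x) t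
      = - lap (u t) x + (β (‖u t x‖ ^ 2) : ℂ) * u t x
  decay : ∀ T > (0 : ℝ), ∀ n N : ℕ, ∃ C : ℝ, ∀ t ∈ Set.Icc (0 : ℝ) T,
      ∀ x, (1 + ‖x‖) ^ N * ‖iteratedFDeriv ℝ n (u t) x‖ ≤ C

section
open scoped ENNReal NNReal

noncomputable def HHe {d : ℕ} (g : EuclideanSpace ℝ (Fin d) → ℂ) : ℝ≥0∞ :=
  ∫⁻ x, (‖g x‖ₑ ^ 2 + ‖fderiv ℝ g x‖ₑ ^ 2)

lemma cs_sq {α : Type*} [MeasurableSpace α] (μ : Measure α) {f g : α → ℝ≥0∞}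
    (hf : AEMeasurable f μ) (hg : AEMeasurable g μ) :
    (∫⁻ x, f x * g x ∂μ) ^ 2 ≤ (∫⁻ x, f x ^ 2 ∂μ) * ∫⁻ x, g x ^ 2 ∂μ := by
  have h := ENNReal.lintegral_mul_le_Lp_mul_Lq μ Real.HolderConjugate.two_two hf hg
  simp only [Pi.mul_apply] at h
  have h2 := pow_le_pow_left' h 2
  refine h2.trans (le_of_eq ?_)
  rw [mul_pow]
  simp only [← ENNReal.rpow_natCast, ← ENNReal.rpow_mul]
  norm_num

lemma enorm_fderiv_pow_le {E : Type*} [NormedAddCommGroup E] [NormedSpace ℝ E]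
    {g : E → ℂ} (hg : ContDiff ℝ 1 g) (m : ℕ) (x : E) :
    ‖fderiv ℝ (fun y => g y ^ (m + 1)) x‖ₑ ≤ (m + 1 : ℝ≥0∞) * (‖g x‖ₑ ^ m * ‖fderiv ℝ g x‖ₑ) := by
  have h := ((hg.differentiable one_ne_zero x).hasFDerivAt).pow (m + 1)
  have h' : fderiv ℝ (fun y => g y ^ (m + 1)) x = ((m + 1 : ℕ) * g x ^ m) • fderiv ℝ g x := by
    simpa using h.fderiv
  rw [h', enorm_smul, enorm_mul, enorm_pow, mul_assoc]
  gcongr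
  rw [← ofReal_norm]
  simp only [Complex.norm_natCast]
  rw [ENNReal.ofReal_natCast]; push_cast; rfl

lemma rec_two {g : EuclideanSpace ℝ (Fin 2) → ℂ} (hg : ContDiff ℝ 1 g)
    (hc : HasCompactSupport g) (m : ℕ) :
    ∫⁻ x, ‖g x‖ₑ ^ (2 * (m + 1)) ≤
      (lintegralPowLePowLIntegralFDerivConst (volume : Measure (EuclideanSpace ℝ (Fin 2))) 2
        * (m + 1) ^ 2) * (HHe g * ∫⁻ x, ‖g x‖ₑ ^ (2 * m)) := by
  have hconj : Real.HolderConjugate (Module.finrank ℝ (EuclideanSpace ℝ (Fin 2))) (2 : ℝ) := by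
    simpa using Real.HolderConjugate.two_two
  have hg' : ContDiff ℝ 1 (fun y => g y ^ (m + 1)) := hg.pow _
  have hc' : HasCompactSupport (fun y => g y ^ (m + 1)) :=
    hc.comp_left (g := fun z : ℂ => z ^ (m + 1)) (by simp)
  have h := lintegral_pow_le_pow_lintegral_fderiv
    (volume : Measure (EuclideanSpace ℝ (Fin 2))) hg' hc' hconj
  have e1 : ∀ x, ‖g x ^ (m + 1)‖ₑ ^ (2 : ℝ) = ‖g x‖ₑ ^ (2 * (m + 1)) := by
    intro x
    rw [enorm_pow, ENNReal.rpow_ofNat, ← pow_mul, mul_comm]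
  simp only [e1] at h
  refine h.trans ?_
  rw [mul_assoc]
  gcongr
  rw [ENNReal.rpow_ofNat]
  have hgm : Measurable (fun x => ‖g x‖ₑ) := hg.continuous.measurable.enorm
  have hgf : Measurable (fun x => ‖fderiv ℝ g x‖ₑ) :=
    (hg.continuous_fderiv one_ne_zero).measurable.enorm
  calc (∫⁻ x, ‖fderiv ℝ (fun y => g y ^ (m + 1)) x‖ₑ) ^ 2
      ≤ (∫⁻ x, (m + 1 : ℝ≥0∞) * (‖g x‖ₑ ^ m * ‖fderiv ℝ g x‖ₑ)) ^ 2 := by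
        gcongr with x
        exact enorm_fderiv_pow_le hg m x
    _ = (m + 1) ^ 2 * (∫⁻ x, (‖g x‖ₑ ^ m * ‖fderiv ℝ g x‖ₑ)) ^ 2 := by
        rw [lintegral_const_mul _ (by fun_prop), mul_pow]
    _ ≤ (m + 1) ^ 2 * ((∫⁻ x, (‖g x‖ₑ ^ m) ^ 2) * ∫⁻ x, ‖fderiv ℝ g x‖ₑ ^ 2) := by
        gcongr
        exact cs_sq _ (hgm.pow_const _).aemeasurable hgf.aemeasurable
    _ ≤ (m + 1) ^ 2 * (HHe g * ∫⁻ x, ‖g x‖ₑ ^ (2 * m)) := by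
        rw [mul_comm (HHe g)]
        refine mul_le_mul' le_rfl (mul_le_mul' (le_of_eq ?_) ?_)
        · congr 1; ext x; rw [← pow_mul, mul_comm]
        · unfold HHe
          gcongr
          exact le_add_self

lemma sup_one {g : EuclideanSpace ℝ (Fin 1) → ℂ} (hg : ContDiff ℝ 1 g)
    (hc : HasCompactSupport g) (x : EuclideanSpace ℝ (Fin 1)) :
    ‖g x‖ₑ ^ 2 ≤ HHe g := by
  let L : ℝ ≃ₗᵢ[ℝ] EuclideanSpace ℝ (Fin 1) :=
    (OrthonormalBasis.singleton (Fin 1) ℝ).repr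
  have hL : MeasurePreserving L volume volume := L.measurePreserving
  let φ : ℝ → ℂ := fun s => (g (L s)) ^ 2
  have hφ : ContDiff ℝ 1 φ := (hg.comp L.contDiff).pow 2
  have hgL : HasCompactSupport (fun s => g (L s)) :=
    hc.comp_homeomorph L.toHomeomorph
  have hφc : HasCompactSupport φ :=
    hgL.comp_left (g := fun z : ℂ => z ^ 2) (by simp)
  have h := hφc.enorm_le_lintegral_Ici_deriv hφ (L.symm x)
  have h1 : ‖g x‖ₑ ^ 2 = ‖φ (L.symm x)‖ₑ := by simp [φ, enorm_pow]
  rw [h1]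
  refine h.trans ((setLIntegral_le_lintegral _ _).trans ?_)
  have hHH : HHe g = ∫⁻ s, (‖g (L s)‖ₑ ^ 2 + ‖fderiv ℝ g (L s)‖ₑ ^ 2) := by
    unfold HHe
    refine (hL.lintegral_comp (f := fun x => ‖g x‖ₑ ^ 2 + ‖fderiv ℝ g x‖ₑ ^ 2) ?_).symm
    exact ((hg.continuous.measurable.enorm).pow_const _).add
      (((hg.continuous_fderiv one_ne_zero).measurable.enorm).pow_const _)
  rw [hHH]
  refine lintegral_mono fun s => ?_
  have hd : HasDerivAt (fun s => g (L s)) (fderiv ℝ g (L s) (L 1)) s := by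
    have := ((hg.differentiable one_ne_zero (L s)).hasFDerivAt).comp_hasDerivAt s
      (L.toContinuousLinearEquiv.toContinuousLinearMap.hasDerivAt (x := s))
    simpa [Function.comp_def] using this
  have hd2 := (hd.pow 2).deriv
  have e : deriv φ s = 2 * g (L s) * (fderiv ℝ g (L s) (L 1)) := by
    simpa [φ, Pi.pow_def] using hd2
  rw [e]
  have hn : ‖fderiv ℝ g (L s) (L 1)‖ ≤ ‖fderiv ℝ g (L s)‖ := by
    refine ((fderiv ℝ g (L s)).le_opNorm _).trans ?_
    simp
  simp only [← ofReal_norm]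
  rw [← ENNReal.ofReal_pow (norm_nonneg _), ← ENNReal.ofReal_pow (norm_nonneg _),
    ← ENNReal.ofReal_add (by positivity) (by positivity)]
  apply ENNReal.ofReal_le_ofReal
  rw [norm_mul, norm_mul]
  simp only [Complex.norm_ofNat]
  nlinarith [sq_nonneg (‖g (L s)‖ - ‖fderiv ℝ g (L s)‖), norm_nonneg (g (L s))]

lemma rec_one {g : EuclideanSpace ℝ (Fin 1) → ℂ} (hg : ContDiff ℝ 1 g)
    (hc : HasCompactSupport g) (m : ℕ) :
    ∫⁻ x, ‖g x‖ₑ ^ (2 * (m + 1)) ≤ HHe g * ∫⁻ x, ‖g x‖ₑ ^ (2 * m) := by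
  rw [← lintegral_const_mul _ ((hg.continuous.measurable.enorm).pow_const _)]
  refine lintegral_mono fun x => ?_
  rw [mul_add, pow_add, mul_comm]
  gcongr
  exact sup_one hg hc x

/-- compactly supported Sobolev predicate -/
def SobC (d : ℕ) (a : ℝ) : Prop := ∃ S : ℝ≥0, ∀ g : EuclideanSpace ℝ (Fin d) → ℂ,
  ContDiff ℝ 1 g → HasCompactSupport g → ∫⁻ x, ‖g x‖ₑ ^ a ≤ S * (HHe g) ^ (a / 2)

lemma sobC_low {d : ℕ} (hd : d = 1 ∨ d = 2) (m : ℕ) : SobC d (2 * (m + 1 : ℕ) : ℝ) := by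
  have key : ∀ m : ℕ, ∃ S : ℝ≥0, ∀ g : EuclideanSpace ℝ (Fin d) → ℂ,
      ContDiff ℝ 1 g → HasCompactSupport g →
      ∫⁻ x, ‖g x‖ₑ ^ (2 * (m + 1)) ≤ S * (HHe g) ^ (m + 1) := by
    have hr : ∀ m : ℕ, ∃ S : ℝ≥0, ∀ g : EuclideanSpace ℝ (Fin d) → ℂ,
      ContDiff ℝ 1 g → HasCompactSupport g →
      ∫⁻ x, ‖g x‖ₑ ^ (2 * (m + 1)) ≤ S * (HHe g * ∫⁻ x, ‖g x‖ₑ ^ (2 * m)) := by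
      intro m
      rcases hd with rfl | rfl
      · exact ⟨1, fun g hg hc => by simpa using rec_one hg hc m⟩
      · refine ⟨lintegralPowLePowLIntegralFDerivConst
          (volume : Measure (EuclideanSpace ℝ (Fin 2))) 2 * (m + 1) ^ 2, fun g hg hc => ?_⟩
        have := rec_two hg hc m
        push_cast
        exact this
    intro m
    induction m with
    | zero =>
      refine ⟨1, fun g hg hc => ?_⟩
      simp only [zero_add, mul_one, pow_one, ENNReal.coe_one, one_mul]
      unfold HHe
      gcongr
      exact le_self_add
    | succ m ih =>
      obtain ⟨S, hS⟩ := ih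
      obtain ⟨S', hS'⟩ := hr (m + 1)
      refine ⟨S' * S, fun g hg hc => (hS' g hg hc).trans ?_⟩
      calc (S' : ℝ≥0∞) * (HHe g * ∫⁻ x, ‖g x‖ₑ ^ (2 * (m + 1)))
          ≤ S' * (HHe g * (S * (HHe g) ^ (m + 1))) := by gcongr; exact hS g hg hc
        _ = _ := by push_cast; ring
  obtain ⟨S, hS⟩ := key m
  refine ⟨S, fun g hg hc => ?_⟩
  have := hS g hg hc
  have e : (2 * (m + 1 : ℕ) : ℝ) / 2 = ((m + 1 : ℕ) : ℝ) := by ring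
  have e' : (2 * (m + 1 : ℕ) : ℝ) = ((2 * (m + 1) : ℕ) : ℝ) := by push_cast; ring
  rw [e, e']
  simpa only [ENNReal.rpow_natCast] using this

lemma sobC_high {d : ℕ} (hd : 3 ≤ d) : SobC d (2 * d / (d - 2)) := by
  have hd' : (3 : ℝ) ≤ d := by exact_mod_cast hd
  set a : ℝ := 2 * d / (d - 2) with ha
  have ha0 : 0 < a := div_pos (by linarith) (by linarith)
  let p' : ℝ≥0 := ⟨a, ha0.le⟩
  let K := eLpNormLESNormFDerivOfEqInnerConst (volume : Measure (EuclideanSpace ℝ (Fin d))) (2 : ℝ)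
  refine ⟨K ^ a, fun g hg hc => ?_⟩
  have h := eLpNorm_le_eLpNorm_fderiv_of_eq_inner (volume : Measure (EuclideanSpace ℝ (Fin d)))
    hg hc (p := 2) (p' := p') (by norm_num) (by simp; omega) (by
      have e0 : ((p' : ℝ≥0) : ℝ) = a := rfl
      have : (d : ℝ) - 2 ≠ 0 := by linarith
      rw [e0, ha]
      simp only [finrank_euclideanSpace_fin]
      field_simp
      push_cast
      ring)
  have hp0 : (p' : ℝ≥0∞) ≠ 0 := by
    have : p' ≠ 0 := by intro h; apply ha0.ne'; exact congrArg NNReal.toReal h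
    exact_mod_cast this
  have h2 := ENNReal.rpow_le_rpow h ha0.le
  rw [eLpNorm_eq_lintegral_rpow_enorm_toReal hp0 ENNReal.coe_ne_top,
    eLpNorm_eq_lintegral_rpow_enorm_toReal (by norm_num) (by simp)] at h2
  rw [← ENNReal.rpow_mul, ENNReal.mul_rpow_of_nonneg _ _ ha0.le, ← ENNReal.rpow_mul] at h2
  have e : (p' : ℝ≥0∞).toReal = a := rfl
  rw [e] at h2
  rw [one_div, inv_mul_cancel₀ ha0.ne', ENNReal.rpow_one] at h2
  refine h2.trans ?_
  rw [ENNReal.coe_rpow_of_nonneg _ ha0.le]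
  refine mul_le_mul' le_rfl ?_
  simp only [ENNReal.coe_ofNat, ENNReal.toReal_ofNat, ENNReal.rpow_ofNat]
  rw [one_div, inv_mul_eq_div]
  refine ENNReal.rpow_le_rpow ?_ (by positivity)
  unfold HHe
  exact lintegral_mono fun x => le_add_self

lemma sob_all {d : ℕ} {a : ℝ} (ha : 0 < a) (h : SobC d a) :
    ∃ S : ℝ≥0, ∀ g : EuclideanSpace ℝ (Fin d) → ℂ,
      ContDiff ℝ 1 g → ∫⁻ x, ‖g x‖ₑ ^ a ≤ S * (HHe g) ^ (a / 2) := by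
  obtain ⟨S, hS⟩ := h
  let χ : ContDiffBump (0 : EuclideanSpace ℝ (Fin d)) := ⟨1, 2, by norm_num, by norm_num⟩
  have hχd : ContDiff ℝ 1 χ := χ.contDiff
  obtain ⟨K, hK⟩ : ∃ K : ℝ, ∀ x, ‖fderiv ℝ χ x‖ ≤ K :=
    (χ.hasCompactSupport.fderiv (𝕜 := ℝ)).exists_bound_of_continuous
      (hχd.continuous_fderiv one_ne_zero)
  have hK0 : 0 ≤ K := (norm_nonneg _).trans (hK 0)
  let M : ℝ≥0 := ⟨2 * K ^ 2 + 2, by positivity⟩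
  refine ⟨S * M ^ (a / 2), fun g hg => ?_⟩
  let c : ℕ → ℝ := fun n => ((n : ℝ) + 1)⁻¹
  have hc0 : ∀ n, 0 < c n := fun n => by positivity
  have hc1 : ∀ n, c n ≤ 1 := fun n => inv_le_one_of_one_le₀ (by simp)
  let G : ℕ → EuclideanSpace ℝ (Fin d) → ℂ := fun n x => χ (c n • x) • g x
  have hχn : ∀ n, ContDiff ℝ 1 (fun x => χ (c n • x)) := fun n =>
    hχd.comp (contDiff_const_smul (c n))
  have hGd : ∀ n, ContDiff ℝ 1 (G n) := fun n => (hχn n).smul hg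
  have hGc : ∀ n, HasCompactSupport (G n) := by
    intro n
    have : HasCompactSupport (fun x => χ (c n • x)) :=
      χ.hasCompactSupport.comp_smul (hc0 n).ne'
    exact this.smul_right
  have hGH : ∀ n, HHe (G n) ≤ M * HHe g := by
    intro n
    unfold HHe
    rw [← lintegral_const_mul']
    swap
    · exact ENNReal.coe_ne_top
    refine lintegral_mono fun x => ?_
    have h1 : ‖G n x‖ ≤ ‖g x‖ := by
      simp only [G, norm_smul]
      have : ‖χ (c n • x)‖ ≤ 1 := by
        rw [Real.norm_of_nonneg χ.nonneg]; exact χ.le_one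
      exact mul_le_of_le_one_left (norm_nonneg _) this
    have hχf : HasFDerivAt (fun x => χ (c n • x)) (c n • fderiv ℝ χ (c n • x)) x := by
      have := ((hχd.differentiable one_ne_zero (c n • x)).hasFDerivAt).comp x
        ((hasFDerivAt_id x).const_smul (c n))
      convert! this using 1
      ext v; simp
    have hf : fderiv ℝ (G n) x = χ (c n • x) • fderiv ℝ g x
        + (c n • fderiv ℝ χ (c n • x)).smulRight (g x) :=
      (hχf.smul (hg.differentiable one_ne_zero x).hasFDerivAt).fderiv
    have h2 : ‖fderiv ℝ (G n) x‖ ≤ ‖fderiv ℝ g x‖ + K * ‖g x‖ := by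
      rw [hf]
      refine (norm_add_le _ _).trans (add_le_add ?_ ?_)
      · rw [norm_smul, Real.norm_of_nonneg χ.nonneg]
        exact mul_le_of_le_one_left (norm_nonneg _) χ.le_one
      · rw [ContinuousLinearMap.norm_smulRight_apply, norm_smul, Real.norm_of_nonneg (hc0 n).le]
        gcongr
        calc c n * ‖fderiv ℝ χ (c n • x)‖ ≤ 1 * K :=
              mul_le_mul (hc1 n) (hK _) (norm_nonneg _) zero_le_one
          _ = K := one_mul _
    have hM : (M : ℝ≥0∞) = ENNReal.ofReal (2 * K ^ 2 + 2) := by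
      rw [ENNReal.ofReal, Real.toNNReal_of_nonneg (by positivity)]
      rfl
    simp only [hM, ← ofReal_norm]
    rw [← ENNReal.ofReal_pow (norm_nonneg _), ← ENNReal.ofReal_pow (norm_nonneg _),
      ← ENNReal.ofReal_pow (norm_nonneg _), ← ENNReal.ofReal_pow (norm_nonneg _),
      ← ENNReal.ofReal_add (by positivity) (by positivity),
      ← ENNReal.ofReal_add (by positivity) (by positivity),
      ← ENNReal.ofReal_mul (by positivity)]
    apply ENNReal.ofReal_le_ofReal
    have h1' := pow_le_pow_left₀ (norm_nonneg _) h1 2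
    have h2' := pow_le_pow_left₀ (norm_nonneg _) h2 2
    have h3 : 0 ≤ K ^ 2 * ‖fderiv ℝ g x‖ ^ 2 := by positivity
    nlinarith [sq_nonneg (‖fderiv ℝ g x‖ - K * ‖g x‖), sq_nonneg ‖fderiv ℝ g x‖, sq_nonneg ‖g x‖]
  have hlim : ∀ x, Filter.liminf (fun n => ‖G n x‖ₑ ^ a) Filter.atTop = ‖g x‖ₑ ^ a := by
    intro x
    refine Filter.Tendsto.liminf_eq ?_
    refine tendsto_const_nhds.congr' ?_
    have hcx : Filter.Tendsto (fun n => c n • x) Filter.atTop (nhds 0) := by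
      have : Filter.Tendsto c Filter.atTop (nhds 0) := by
        simpa [c, one_div] using tendsto_one_div_add_atTop_nhds_zero_nat (𝕜 := ℝ)
      simpa using this.smul_const x
    filter_upwards [hcx.eventually (χ.eventuallyEq_one)] with n hn
    simp only [G, hn, Pi.one_apply, one_smul]
  calc ∫⁻ x, ‖g x‖ₑ ^ a = ∫⁻ x, Filter.liminf (fun n => ‖G n x‖ₑ ^ a) Filter.atTop := by
        simp only [hlim]
    _ ≤ Filter.liminf (fun n => ∫⁻ x, ‖G n x‖ₑ ^ a) Filter.atTop :=
        lintegral_liminf_le fun n => ((hGd n).continuous.measurable.enorm).pow_const _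
    _ ≤ Filter.liminf (fun _ : ℕ => (S * M ^ (a / 2) : ℝ≥0) * HHe g ^ (a / 2)) Filter.atTop := by
        refine Filter.liminf_le_liminf (Filter.Eventually.of_forall fun n => ?_)
        refine (hS _ (hGd n) (hGc n)).trans ?_
        rw [ENNReal.coe_mul, mul_assoc, ENNReal.coe_rpow_of_nonneg _ (by positivity),
          ← ENNReal.mul_rpow_of_nonneg _ _ (by positivity)]
        gcongr
        exact hGH n
    _ = _ := by simp


lemma B_bound (β : ℝ → ℝ) (hβ : Continuous β) (p C : ℝ)
    (hgrowth : ∀ t : ℝ, 1 ≤ t → |β (t ^ 2) * t| ≤ C * t ^ p)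
    (B : ℝ → ℝ) (hB : ∀ t, HasDerivAt B (β t) t) (hB0 : B 0 = 0)
    (a : ℝ) (ha : p + 1 ≤ a) (ha2 : 2 ≤ a) :
    ∃ K : ℝ, 0 ≤ K ∧ ∀ r : ℝ, 0 ≤ r → B (r ^ 2) ≤ K * (r ^ 2 + r ^ a) := by
  have hC : 0 ≤ C := by
    have := hgrowth 1 le_rfl
    simp only [Real.one_rpow, mul_one] at this
    exact (abs_nonneg _).trans this
  obtain ⟨K₁, hK₁⟩ := (isCompact_Icc (a := (0 : ℝ)) (b := 1)).exists_bound_of_continuousOn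
    hβ.continuousOn
  have hK₁0 : 0 ≤ K₁ := (norm_nonneg _).trans (hK₁ 0 (by simp))
  have hsmall : ∀ s ∈ Set.Icc (0 : ℝ) 1, B s ≤ K₁ * s := by
    intro s hs
    have := (convex_Icc (0 : ℝ) 1).norm_image_sub_le_of_norm_hasDerivWithin_le
      (f := B) (f' := β) (fun x _ => (hB x).hasDerivWithinAt) hK₁ (x := 0) (y := s)
      (by simp) hs
    rw [hB0, sub_zero, sub_zero, Real.norm_eq_abs, Real.norm_of_nonneg hs.1] at this
    exact (le_abs_self _).trans this
  refine ⟨K₁ + 2 * C, by positivity, fun r hr => ?_⟩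
  have hra : 0 ≤ r ^ a := Real.rpow_nonneg hr _
  rcases le_total r 1 with h1 | h1
  · have := hsmall (r ^ 2) ⟨by positivity, by nlinarith⟩
    nlinarith [mul_nonneg hK₁0 hra, mul_nonneg hC hra, mul_nonneg hC (sq_nonneg r)]
  · have hder : ∀ x ∈ Set.Icc 1 r, HasDerivWithinAt (fun y => B (y ^ 2)) (2 * (β (x ^ 2) * x))
        (Set.Icc 1 r) x := by
      intro x _
      have := (hB (x ^ 2)).comp x ((hasDerivAt_id x).pow 2)
      refine HasDerivAt.hasDerivWithinAt ?_
      convert! this using 1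
      simp; ring
    have hbd : ∀ x ∈ Set.Icc 1 r, ‖2 * (β (x ^ 2) * x)‖ ≤ 2 * C * r ^ (a - 1) := by
      intro x hx
      rw [norm_mul, Real.norm_eq_abs, Real.norm_eq_abs, abs_two, mul_assoc]
      have h2 : x ^ p ≤ r ^ (a - 1) :=
        (Real.rpow_le_rpow_of_exponent_le hx.1 (by linarith)).trans
          (Real.rpow_le_rpow (by linarith [hx.1]) hx.2 (by linarith))
      have := (hgrowth x hx.1).trans (mul_le_mul_of_nonneg_left h2 hC)
      linarith
    have := (convex_Icc (1 : ℝ) r).norm_image_sub_le_of_norm_hasDerivWithin_le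
      hder hbd (x := 1) (y := r) (by simp [h1]) (by simp [h1])
    simp only [one_pow] at this
    rw [Real.norm_eq_abs, Real.norm_of_nonneg (by linarith)] at this
    have h3 := (le_abs_self _).trans this
    have h4 := hsmall 1 (by simp)
    have h5 : r ^ (a - 1) * r = r ^ a := by
      rw [Real.rpow_sub_one (by linarith)]; field_simp
    have h6 : 0 ≤ r ^ (a - 1) := Real.rpow_nonneg hr _
    have h7 : (1 : ℝ) ≤ r ^ a := Real.one_le_rpow h1 (by linarith)
    have h8 : 2 * C * r ^ (a - 1) * (r - 1) ≤ 2 * C * r ^ a := by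
      rw [← h5]; nlinarith [mul_nonneg hC h6]
    nlinarith [mul_nonneg hK₁0 (sq_nonneg r), mul_nonneg hC (sq_nonneg r),
      mul_le_mul_of_nonneg_left h7 hK₁0]

lemma norm_fderiv_sq_le {d : ℕ} (L : EuclideanSpace ℝ (Fin d) →L[ℝ] ℂ) :
    ‖L‖ ^ 2 ≤ ∑ i : Fin d, ‖L (EuclideanSpace.single i 1)‖ ^ 2 := by
  have h : ‖L‖ ≤ Real.sqrt (∑ i : Fin d, ‖L (EuclideanSpace.single i 1)‖ ^ 2) := by
    refine L.opNorm_le_bound (Real.sqrt_nonneg _) fun x => ?_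
    have hx : x = ∑ i, x i • EuclideanSpace.single i (1 : ℝ) := by
      have := (EuclideanSpace.basisFun (Fin d) ℝ).sum_repr x
      simpa using this.symm
    have hLx : L x = ∑ i, x i • L (EuclideanSpace.single i (1 : ℝ)) := by
      conv_lhs => rw [hx]
      simp [map_sum]
    rw [hLx]
    refine (norm_sum_le _ _).trans ?_
    simp only [norm_smul]
    rw [EuclideanSpace.norm_eq x, mul_comm]
    exact Real.sum_mul_le_sqrt_mul_sqrt _ _ _
  calc ‖L‖ ^ 2 ≤ _ := pow_le_pow_left₀ (norm_nonneg _) h 2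
    _ = _ := Real.sq_sqrt (by positivity)

lemma HHe_le {d : ℕ} {g : EuclideanSpace ℝ (Fin d) → ℂ}
    (hi : Integrable (fun x => ‖g x‖ ^ 2
      + ∑ i : Fin d, ‖fderiv ℝ g x (EuclideanSpace.single i 1)‖ ^ 2)) :
    HHe g ≤ ENNReal.ofReal (H1norm g ^ 2) := by
  unfold H1norm
  rw [Real.sq_sqrt (integral_nonneg fun x => by positivity),
    ofReal_integral_eq_lintegral_ofReal hi (Filter.Eventually.of_forall fun x => by positivity)]
  unfold HHe
  refine lintegral_mono fun x => ?_
  simp only [← ofReal_norm]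
  rw [← ENNReal.ofReal_pow (norm_nonneg _), ← ENNReal.ofReal_pow (norm_nonneg _),
      ← ENNReal.ofReal_add (by positivity) (by positivity)]
  apply ENNReal.ofReal_le_ofReal
  gcongr
  exact norm_fderiv_sq_le _

lemma potential_bound {d : ℕ} (hd : 1 ≤ d)
    (β : ℝ → ℝ) (hβ : Continuous β) (p : ℝ)
    (hp : 3 ≤ d → p < ((d : ℝ) + 2) / ((d : ℝ) - 2)) (C : ℝ)
    (hgrowth : ∀ t : ℝ, 1 ≤ t → |β (t ^ 2) * t| ≤ C * t ^ p)
    (B : ℝ → ℝ) (hB : ∀ t, HasDerivAt B (β t) t) (hB0 : B 0 = 0)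
    (hBnonneg : ∀ t : ℝ, 0 ≤ t → 0 ≤ B t) :
    ∃ Q : ℝ, 0 ≤ Q ∧ ∀ g : EuclideanSpace ℝ (Fin d) → ℂ, ContDiff ℝ 1 g →
      Integrable (fun x => ‖g x‖ ^ 2
      + ∑ i : Fin d, ‖fderiv ℝ g x (EuclideanSpace.single i 1)‖ ^ 2) →
      H1norm g ≤ 1 → ∫ x, B (‖g x‖ ^ 2) ≤ Q * H1norm g ^ 2 := by
  obtain ⟨a, hap, ha2, hS⟩ : ∃ a : ℝ, p + 1 ≤ a ∧ 2 ≤ a ∧ SobC d a := by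
    by_cases h3 : 3 ≤ d
    · have hd' : (3 : ℝ) ≤ d := by exact_mod_cast h3
      have h0 : (0 : ℝ) < d - 2 := by linarith
      refine ⟨_, ?_, ?_, sobC_high h3⟩
      · have := hp h3
        have e : (2 * d / (d - 2) : ℝ) = (d + 2) / (d - 2) + 1 := by field_simp; ring
        rw [e]; linarith
      · rw [le_div_iff₀ h0]; linarith
    · obtain ⟨m, hm⟩ := exists_nat_ge p
      refine ⟨_, ?_, ?_, sobC_low (by omega) m⟩
      · push_cast; have : (0 : ℝ) ≤ m := by positivity
        linarith
      · push_cast; have : (0 : ℝ) ≤ m := by positivity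
        linarith
  obtain ⟨S, hS⟩ := sob_all (by linarith) hS
  obtain ⟨K, hK0, hK⟩ := B_bound β hβ p C hgrowth B hB hB0 a hap ha2
  refine ⟨K * (1 + S), by positivity, fun g hg hi hg1 => ?_⟩
  have hh0 : 0 ≤ H1norm g := Real.sqrt_nonneg _
  have hBc : Continuous B := continuous_iff_continuousAt.2 fun t => (hB t).continuousAt
  have hms : AEStronglyMeasurable (fun x => B (‖g x‖ ^ 2)) volume :=
    (hBc.comp (hg.continuous.norm.pow 2)).aestronglyMeasurable
  rw [integral_eq_lintegral_of_nonneg_ae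
    (Filter.Eventually.of_forall fun x => hBnonneg _ (by positivity)) hms]
  refine ENNReal.toReal_le_of_le_ofReal (by positivity) ?_
  have hHH := HHe_le hi
  have hgm : Measurable (fun x => ‖g x‖ₑ) := hg.continuous.measurable.enorm
  calc ∫⁻ x, ENNReal.ofReal (B (‖g x‖ ^ 2))
      ≤ ∫⁻ x, ENNReal.ofReal K * (‖g x‖ₑ ^ 2 + ‖g x‖ₑ ^ a) := by
        refine lintegral_mono fun x => ?_
        refine (ENNReal.ofReal_le_ofReal (hK _ (norm_nonneg (g x)))).trans (le_of_eq ?_)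
        rw [ENNReal.ofReal_mul hK0, ENNReal.ofReal_add (by positivity) (by positivity),
          ENNReal.ofReal_pow (norm_nonneg _),
          ← ENNReal.ofReal_rpow_of_nonneg (norm_nonneg _) (by linarith), ofReal_norm]
    _ = ENNReal.ofReal K * ((∫⁻ x, ‖g x‖ₑ ^ 2) + ∫⁻ x, ‖g x‖ₑ ^ a) := by
        rw [lintegral_const_mul _ (by fun_prop), lintegral_add_left (by fun_prop)]
    _ ≤ ENNReal.ofReal K * (ENNReal.ofReal (H1norm g ^ 2)
          + S * ENNReal.ofReal (H1norm g ^ 2)) := by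
        gcongr
        · refine le_trans ?_ hHH
          unfold HHe
          gcongr
          exact le_self_add
        · refine (hS g hg).trans ?_
          gcongr
          refine (ENNReal.rpow_le_rpow hHH (by linarith)).trans ?_
          rw [ENNReal.ofReal_rpow_of_nonneg (by positivity) (by linarith)]
          apply ENNReal.ofReal_le_ofReal
          have h1 : H1norm g ^ 2 ≤ 1 := by nlinarith
          calc (H1norm g ^ 2) ^ (a / 2) ≤ (H1norm g ^ 2) ^ (1 : ℝ) :=
                Real.rpow_le_rpow_of_exponent_ge_of_imp (by positivity) h1 (by linarith) (by
                  intro _ h; linarith)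
            _ = _ := Real.rpow_one _
    _ = ENNReal.ofReal (K * (1 + S) * H1norm g ^ 2) := by
        rw [mul_assoc, ENNReal.ofReal_mul hK0, ENNReal.ofReal_mul (by positivity),
          ENNReal.ofReal_add zero_le_one (by positivity), ENNReal.ofReal_one,
          ENNReal.ofReal_coe_nnreal]
        ring


noncomputable def wgt {d : ℕ} (x : EuclideanSpace ℝ (Fin d)) : ℝ := ((1 + ‖x‖) ^ (d + 1))⁻¹

lemma wgt_nonneg {d : ℕ} (x : EuclideanSpace ℝ (Fin d)) : 0 ≤ wgt x := by
  unfold wgt; positivity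

lemma wgt_le_one {d : ℕ} (x : EuclideanSpace ℝ (Fin d)) : wgt x ≤ 1 := by
  unfold wgt
  exact inv_le_one_of_one_le₀ (one_le_pow₀ (by linarith [norm_nonneg x]))

lemma wgt_integrable {d : ℕ} : Integrable (wgt (d := d)) := by
  have := integrable_one_add_norm (E := EuclideanSpace ℝ (Fin d)) (μ := volume)
    (r := ((d + 1 : ℕ) : ℝ)) (by simp)
  refine this.congr (Filter.Eventually.of_forall fun x => ?_)
  simp only [wgt]
  rw [Real.rpow_neg (by positivity), Real.rpow_natCast]

/-- uniform decay on `[0,T]` -/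
def Dec {d : ℕ} {F : Type*} [NormedAddCommGroup F] (T : ℝ)
    (V : ℝ × EuclideanSpace ℝ (Fin d) → F) : Prop :=
  ∃ C : ℝ, 0 ≤ C ∧ ∀ t ∈ Set.Icc (0 : ℝ) T, ∀ x, ‖V (t, x)‖ ≤ C * wgt x

section
variable {d : ℕ} {F G H : Type*} [NormedAddCommGroup F] [NormedAddCommGroup G]
  [NormedAddCommGroup H] {T : ℝ}

lemma Dec.add {V W : ℝ × EuclideanSpace ℝ (Fin d) → F} (hV : Dec T V) (hW : Dec T W) :
    Dec T (fun p => V p + W p) := by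
  obtain ⟨C, hC, h⟩ := hV
  obtain ⟨C', hC', h'⟩ := hW
  refine ⟨C + C', by positivity, fun t ht x => (norm_add_le _ _).trans ?_⟩
  rw [add_mul]
  exact add_le_add (h t ht x) (h' t ht x)

lemma Dec.sum {ι : Type*} (s : Finset ι) {V : ι → ℝ × EuclideanSpace ℝ (Fin d) → F}
    (hV : ∀ i, Dec T (V i)) : Dec T (fun p => ∑ i ∈ s, V i p) := by
  classical
  induction s using Finset.induction_on with
  | empty => exact ⟨0, le_rfl, fun t _ x => by simp⟩
  | insert a s ha ih =>
    simp only [Finset.sum_insert ha]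
    exact (hV a).add ih

lemma Dec.dom {V : ℝ × EuclideanSpace ℝ (Fin d) → F} (hV : Dec T V)
    {W : ℝ × EuclideanSpace ℝ (Fin d) → G} (K : ℝ) (hK : 0 ≤ K)
    (h : ∀ t ∈ Set.Icc (0 : ℝ) T, ∀ x, ‖W (t, x)‖ ≤ K * ‖V (t, x)‖) : Dec T W := by
  obtain ⟨C, hC, hV⟩ := hV
  refine ⟨K * C, by positivity, fun t ht x => (h t ht x).trans ?_⟩
  rw [mul_assoc]
  exact mul_le_mul_of_nonneg_left (hV t ht x) hK

lemma Dec.bdd {V : ℝ × EuclideanSpace ℝ (Fin d) → F} (hV : Dec T V) :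
    ∃ C : ℝ, 0 ≤ C ∧ ∀ t ∈ Set.Icc (0 : ℝ) T, ∀ x, ‖V (t, x)‖ ≤ C := by
  obtain ⟨C, hC, hV⟩ := hV
  exact ⟨C, hC, fun t ht x => (hV t ht x).trans (mul_le_of_le_one_right hC (wgt_le_one x))⟩

lemma Dec.mul {V : ℝ × EuclideanSpace ℝ (Fin d) → F} (hV : Dec T V)
    {W : ℝ × EuclideanSpace ℝ (Fin d) → G} (hW : Dec T W)
    {Z : ℝ × EuclideanSpace ℝ (Fin d) → H}
    (h : ∀ t ∈ Set.Icc (0 : ℝ) T, ∀ x, ‖Z (t, x)‖ ≤ ‖V (t, x)‖ * ‖W (t, x)‖) : Dec T Z := by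
  obtain ⟨K, hK, hVb⟩ := hV.bdd
  refine hW.dom K hK fun t ht x => (h t ht x).trans ?_
  exact mul_le_mul_of_nonneg_right (hVb t ht x) (norm_nonneg _)

lemma Dec.integrable [NormedSpace ℝ F] {V : ℝ × EuclideanSpace ℝ (Fin d) → F} (hV : Dec T V)
    (hc : Continuous V) {t : ℝ} (ht : t ∈ Set.Icc (0 : ℝ) T) :
    Integrable (fun x => V (t, x)) := by
  obtain ⟨C, hC, hV⟩ := hV
  exact (wgt_integrable.const_mul C).mono' (by fun_prop : Continuous fun x => V (t, x)).aestronglyMeasurable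
    (Filter.Eventually.of_forall fun x => hV t ht x)
end

section
variable {d : ℕ} {T : ℝ}

lemma conserve (hT : 0 ≤ T) {V V' : ℝ × EuclideanSpace ℝ (Fin d) → ℝ} (hVc : Continuous V)
    (hV'c : Continuous V') (hd : ∀ t x, HasDerivAt (fun s => V (s, x)) (V' (t, x)) t)
    (hV : Dec T V) (hV' : Dec T V') (h0 : ∀ t ∈ Set.Icc (0 : ℝ) T, ∫ x, V' (t, x) = 0) :
    ∫ x, V (T, x) = ∫ x, V (0, x) := by
  have hi : Integrable (Function.uncurry fun t x => V' (t, x))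
      ((volume.restrict (Set.uIoc 0 T)).prod volume) := by
    obtain ⟨C, hC, hb⟩ := hV'
    have hw : Integrable (fun p : ℝ × EuclideanSpace ℝ (Fin d) => C * wgt p.2)
        ((volume.restrict (Set.uIoc 0 T)).prod volume) := by
      have h1 : Integrable (fun _ : ℝ => C) (volume.restrict (Set.uIoc 0 T)) := by
        rw [Set.uIoc_of_le hT]
        exact integrableOn_const (by simp)
      exact h1.mul_prod wgt_integrable
    refine hw.mono' hV'c.aestronglyMeasurable ?_
    have e : ((volume.restrict (Set.uIoc 0 T)).prod
        (volume : Measure (EuclideanSpace ℝ (Fin d))))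
        = ((volume : Measure ℝ).prod volume).restrict (Set.uIoc 0 T ×ˢ Set.univ) := by
      rw [← Measure.prod_restrict, Measure.restrict_univ]
    rw [e]
    refine (ae_restrict_iff' (measurableSet_uIoc.prod MeasurableSet.univ)).2
      (Filter.Eventually.of_forall fun p hp => ?_)
    rw [Set.uIoc_of_le hT] at hp
    exact hb p.1 ⟨hp.1.1.le, hp.1.2⟩ p.2
  have hswap := intervalIntegral_integral_swap hi
  have hl : ∫ t in (0 : ℝ)..T, ∫ x, V' (t, x) = 0 := by
    rw [intervalIntegral.integral_congr (g := fun _ => (0 : ℝ))]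
    · simp
    · intro t ht
      rw [Set.uIcc_of_le hT] at ht
      exact h0 t ht
  have hr : ∀ x, ∫ t in (0 : ℝ)..T, V' (t, x) = V (T, x) - V (0, x) := by
    intro x
    refine intervalIntegral.integral_eq_sub_of_hasDerivAt (f := fun s => V (s, x))
      (fun t _ => hd t x) ?_
    exact (by fun_prop : Continuous fun t => V' (t, x)).intervalIntegrable _ _
  rw [hl] at hswap
  simp only [hr] at hswap
  rw [integral_sub (hV.integrable hVc ⟨hT, le_rfl⟩) (hV.integrable hVc ⟨le_rfl, hT⟩)] at hswap
  linarith

/-- spatial slice derivative -/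
lemma slice_hasFDerivAt {F : Type*} [NormedAddCommGroup F] [NormedSpace ℝ F]
    {V : ℝ × EuclideanSpace ℝ (Fin d) → F} (hV : Differentiable ℝ V) (t : ℝ)
    (x : EuclideanSpace ℝ (Fin d)) :
    HasFDerivAt (fun y => V (t, y))
      ((fderiv ℝ V (t, x)).comp (ContinuousLinearMap.inr ℝ ℝ (EuclideanSpace ℝ (Fin d)))) x :=
  (hV (t, x)).hasFDerivAt.comp x (hasFDerivAt_prodMk_right t x)

lemma slice_fderiv {F : Type*} [NormedAddCommGroup F] [NormedSpace ℝ F]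
    {V : ℝ × EuclideanSpace ℝ (Fin d) → F} (hV : Differentiable ℝ V) (t : ℝ)
    (x e : EuclideanSpace ℝ (Fin d)) :
    fderiv ℝ (fun y => V (t, y)) x e = fderiv ℝ V (t, x) (0, e) := by
  rw [(slice_hasFDerivAt hV t x).fderiv]; simp

lemma slice_hasDerivAt {F : Type*} [NormedAddCommGroup F] [NormedSpace ℝ F]
    {V : ℝ × EuclideanSpace ℝ (Fin d) → F} (hV : Differentiable ℝ V) (t : ℝ)
    (x : EuclideanSpace ℝ (Fin d)) :
    HasDerivAt (fun s => V (s, x)) (fderiv ℝ V (t, x) (1, 0)) t :=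
  (hV (t, x)).hasFDerivAt.comp_hasDerivAt t
    ((hasDerivAt_id t).prodMk (hasDerivAt_const t x))

lemma ibp {F : Type*} [NormedAddCommGroup F] [InnerProductSpace ℝ F]
    {V W : ℝ × EuclideanSpace ℝ (Fin d) → F} (hV : ContDiff ℝ 1 V) (hW : ContDiff ℝ 1 W)
    (e : EuclideanSpace ℝ (Fin d)) (dV : Dec T V) (dW : Dec T W)
    (dV' : Dec T (fun p => fderiv ℝ V p (0, e))) (dW' : Dec T (fun p => fderiv ℝ W p (0, e)))
    {t : ℝ} (ht : t ∈ Set.Icc (0 : ℝ) T) :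
    ∫ x, inner ℝ (V (t, x)) (fderiv ℝ W (t, x) (0, e))
      = - ∫ x, inner ℝ (fderiv ℝ V (t, x) (0, e)) (W (t, x)) := by
  have cV := hV.continuous
  have cW := hW.continuous
  have cV' : Continuous (fun p => fderiv ℝ V p (0, e)) :=
    (hV.continuous_fderiv one_ne_zero).clm_apply continuous_const
  have cW' : Continuous (fun p => fderiv ℝ W p (0, e)) :=
    (hW.continuous_fderiv one_ne_zero).clm_apply continuous_const
  obtain ⟨Bi, hBi⟩ : ∃ Bi : F →L[ℝ] F →L[ℝ] ℝ, ∀ a b, Bi a b = inner ℝ a b :=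
    ⟨innerSL ℝ, fun a b => rfl⟩
  have key : ∀ {A A' : ℝ × EuclideanSpace ℝ (Fin d) → F}, Dec T A → Dec T A' → Continuous A →
      Continuous A' → Integrable (fun x => Bi (A (t, x)) (A' (t, x))) := by
    intro A A' hA hA' cA cA'
    have h1 : Dec T (fun p => (inner ℝ (A p) (A' p) : ℝ)) :=
      hA.mul hA' fun t _ x => norm_inner_le_norm _ _
    have h2 := h1.integrable (cA.inner cA') ht
    simpa only [hBi] using h2
  have lV : ∀ x, HasLineDerivAt ℝ (fun x => V (t, x)) (fderiv ℝ V (t, x) (0, e)) x e := by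
    intro x
    have h := (slice_hasFDerivAt (hV.differentiable one_ne_zero) t x).hasLineDerivAt e
    simpa using h
  have lW : ∀ x, HasLineDerivAt ℝ (fun x => W (t, x)) (fderiv ℝ W (t, x) (0, e)) x e := by
    intro x
    have h := (slice_hasFDerivAt (hW.differentiable one_ne_zero) t x).hasLineDerivAt e
    simpa using h
  have := integral_bilinear_hasLineDerivAt_right_eq_neg_left_of_integrable (μ := volume)
    (f := fun x => V (t, x)) (g := fun x => W (t, x)) (v := e) (B := Bi)
    (f' := fun x => fderiv ℝ V (t, x) (0, e)) (g' := fun x => fderiv ℝ W (t, x) (0, e))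
    (key dV' dW cV' cW) (key dV dW' cV cW') (key dV dW cV cW) (fun x _ => lV x) (fun x _ => lW x)
  simpa only [hBi] using this

/-- uniform decay of all spatial derivatives -/
def DecS {F : Type*} [NormedAddCommGroup F] [NormedSpace ℝ F] (T : ℝ)
    (V : ℝ × EuclideanSpace ℝ (Fin d) → F) : Prop :=
  ∀ n : ℕ, ∃ C : ℝ, 0 ≤ C ∧ ∀ t ∈ Set.Icc (0 : ℝ) T, ∀ x,
    ‖iteratedFDeriv ℝ n (fun y => V (t, y)) x‖ ≤ C * wgt x

lemma DecS.dec {F : Type*} [NormedAddCommGroup F] [NormedSpace ℝ F]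
    {V : ℝ × EuclideanSpace ℝ (Fin d) → F} (h : DecS T V) : Dec T V := by
  simpa [Dec] using h 0

lemma smooth_dir {E F : Type*} [NormedAddCommGroup E] [NormedSpace ℝ E] [NormedAddCommGroup F]
    [NormedSpace ℝ F] {V : E → F} (hV : ContDiff ℝ (⊤ : ℕ∞) V) (v : E) :
    ContDiff ℝ (⊤ : ℕ∞) (fun p => fderiv ℝ V p v) :=
  (hV.fderiv_right (m := (⊤ : ℕ∞)) (by simp)).clm_apply contDiff_const

lemma DecS.dir {F : Type*} [NormedAddCommGroup F] [NormedSpace ℝ F]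
    {V : ℝ × EuclideanSpace ℝ (Fin d) → F} (hV : ContDiff ℝ (⊤ : ℕ∞) V) (h : DecS T V)
    (e : EuclideanSpace ℝ (Fin d)) : DecS T (fun p => fderiv ℝ V p (0, e)) := by
  intro n
  obtain ⟨C, hC, hb⟩ := h (n + 1)
  refine ⟨‖e‖ * C, by positivity, fun t ht x => ?_⟩
  have e1 : (fun y => fderiv ℝ V (t, y) (0, e)) = fun y => fderiv ℝ (fun z => V (t, z)) y e := by
    ext y; rw [slice_fderiv (hV.differentiable (by simp))]
  have hs : ContDiff ℝ (⊤ : ℕ∞) (fun z => V (t, z)) :=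
    hV.comp (contDiff_prodMk_right t)
  rw [e1]
  have hs' : ContDiff ℝ (⊤ : ℕ∞) (fderiv ℝ fun z => V (t, z)) :=
    hs.fderiv_right (m := (⊤ : ℕ∞)) (by simp)
  have := norm_iteratedFDeriv_clm_apply_const (f := fderiv ℝ (fun z => V (t, z))) (c := e)
    (x := x) (N := (⊤ : ℕ∞)) (n := n) hs'.contDiffAt (by exact_mod_cast le_top)
  refine this.trans ?_
  rw [norm_iteratedFDeriv_fderiv, mul_assoc]
  exact mul_le_mul_of_nonneg_left (hb t ht x) (norm_nonneg _)
end


lemma inner_I_self (z : ℂ) : inner ℝ z (Complex.I * z) = 0 := by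
  simp [Complex.inner]; ring

lemma inner_I_self' (z : ℂ) : inner ℝ (Complex.I * z) z = 0 := by
  rw [real_inner_comm]; exact inner_I_self z

set_option maxHeartbeats 1000000 in
lemma energy {d : ℕ} (β : ℝ → ℝ) (hβ : ContDiff ℝ (⊤ : ℕ∞) β)
    (B : ℝ → ℝ) (hB : ∀ t, HasDerivAt B (β t) t) (hB0 : B 0 = 0)
    (u : ℝ → EuclideanSpace ℝ (Fin d) → ℂ) (hu : IsClassicalSolution β u) (T : ℝ) (hT : 0 < T) :
    (∀ t ∈ Set.Icc (0 : ℝ) T, Integrable (fun x => ‖u t x‖ ^ 2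
      + ∑ i : Fin d, ‖fderiv ℝ (u t) x (EuclideanSpace.single i 1)‖ ^ 2)) ∧
    (∀ t ∈ Set.Icc (0 : ℝ) T, Integrable (fun x => B (‖u t x‖ ^ 2))) ∧
    ∫ x, (‖u T x‖ ^ 2 + ∑ i : Fin d, ‖fderiv ℝ (u T) x (EuclideanSpace.single i 1)‖ ^ 2
      + B (‖u T x‖ ^ 2)) =
    ∫ x, (‖u 0 x‖ ^ 2 + ∑ i : Fin d, ‖fderiv ℝ (u 0) x (EuclideanSpace.single i 1)‖ ^ 2
      + B (‖u 0 x‖ ^ 2)) := by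
  set U : ℝ × EuclideanSpace ℝ (Fin d) → ℂ := fun p => u p.1 p.2 with hUdef
  have sU : ContDiff ℝ (⊤ : ℕ∞) U := hu.smooth
  have dfU : Differentiable ℝ U := sU.differentiable (by simp)
  set e : Fin d → EuclideanSpace ℝ (Fin d) := fun i => EuclideanSpace.single i 1 with he
  set U1 : Fin d → ℝ × EuclideanSpace ℝ (Fin d) → ℂ := fun i p => fderiv ℝ U p (0, e i) with hU1
  have sU1 : ∀ i, ContDiff ℝ (⊤ : ℕ∞) (U1 i) := fun i => smooth_dir sU _
  have dfU1 : ∀ i, Differentiable ℝ (U1 i) := fun i => (sU1 i).differentiable (by simp)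
  set U2 : Fin d → ℝ × EuclideanSpace ℝ (Fin d) → ℂ := fun i p => fderiv ℝ (U1 i) p (0, e i)
    with hU2
  have sU2 : ∀ i, ContDiff ℝ (⊤ : ℕ∞) (U2 i) := fun i => smooth_dir (sU1 i) _
  have dfU2 : ∀ i, Differentiable ℝ (U2 i) := fun i => (sU2 i).differentiable (by simp)
  set Ut : ℝ × EuclideanSpace ℝ (Fin d) → ℂ := fun p => fderiv ℝ U p (1, 0) with hUt
  have sUt : ContDiff ℝ (⊤ : ℕ∞) Ut := smooth_dir sU _
  have dfUt : Differentiable ℝ Ut := sUt.differentiable (by simp)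
  -- symmetric second derivatives
  have hsymm : ∀ i p, fderiv ℝ (U1 i) p (1, 0) = fderiv ℝ Ut p (0, e i) := by
    intro i p
    have hd2 : DifferentiableAt ℝ (fderiv ℝ U) p :=
      (sU.fderiv_right (m := (⊤ : ℕ∞)) (by simp)).differentiable (by simp) p
    have hs : IsSymmSndFDerivAt ℝ U p := sU.contDiffAt.isSymmSndFDerivAt (by
      rw [minSmoothness_of_isRCLikeNormedField]; exact WithTop.coe_le_coe.2 (le_top : (2 : ℕ∞) ≤ ⊤))
    have h1 := (hd2.hasFDerivAt.clm_apply (hasFDerivAt_const ((0 : ℝ), e i) p)).fderiv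
    have h2 := (hd2.hasFDerivAt.clm_apply
      (hasFDerivAt_const ((1 : ℝ), (0 : EuclideanSpace ℝ (Fin d))) p)).fderiv
    simp only [hU1, hUt]
    rw [h1, h2]
    simpa using hs (1, 0) (0, e i)
  -- first slices
  have hfd : ∀ t x i, fderiv ℝ (u t) x (e i) = U1 i (t, x) := fun t x i =>
    slice_fderiv dfU t x (e i)
  have hlap : ∀ t x, lap (u t) x = ∑ i, U2 i (t, x) := by
    intro t x
    unfold lap
    refine Finset.sum_congr rfl fun i _ => ?_
    have : (fun y => fderiv ℝ (u t) y (EuclideanSpace.single i 1)) = fun y => U1 i (t, y) := by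
      ext y; exact hfd t y i
    rw [this]
    exact slice_fderiv (dfU1 i) t x (e i)
  have hut : ∀ t x, deriv (fun s => u s x) t = Ut (t, x) := fun t x =>
    (slice_hasDerivAt dfU t x).deriv
  have heq : ∀ t, 0 ≤ t → ∀ x, Complex.I * Ut (t, x)
      = - (∑ i, U2 i (t, x)) + (β (‖U (t, x)‖ ^ 2) : ℂ) * U (t, x) := by
    intro t ht x
    rw [← hut, ← hlap]; exact hu.eqn t ht x
  set Z : ℝ × EuclideanSpace ℝ (Fin d) → ℂ := fun p =>
    Complex.I * (∑ i, U2 i p) - Complex.I * (β (‖U p‖ ^ 2) • U p) with hZ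
  have hUtZ : ∀ t, 0 ≤ t → ∀ x, Ut (t, x) = Z (t, x) := by
    intro t ht x
    have h := congrArg (fun z => -Complex.I * z) (heq t ht x)
    simp only [hZ]
    have e1 : Ut (t, x) = -Complex.I * (Complex.I * Ut (t, x)) := by
      rw [← mul_assoc]; simp
    rw [e1, heq t ht x, Complex.real_smul]
    ring
  -- decay
  have dSU : DecS T U := by
    intro n
    obtain ⟨C, hC⟩ := hu.decay T hT n (d + 1)
    have hC0 : 0 ≤ C := le_trans (by positivity) (hC 0 ⟨le_rfl, hT.le⟩ 0)
    refine ⟨C, hC0, fun t ht x => ?_⟩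
    have := hC t ht x
    unfold wgt
    rw [← div_eq_mul_inv, le_div_iff₀ (by positivity), mul_comm]
    exact this
  have dSU1 : ∀ i, DecS T (U1 i) := fun i => dSU.dir sU (e i)
  have dSU2 : ∀ i, DecS T (U2 i) := fun i => (dSU1 i).dir (sU1 i) (e i)
  have dU := dSU.dec
  have dU1 := fun i => (dSU1 i).dec
  have dU2 := fun i => (dSU2 i).dec
  obtain ⟨M, hM0, hM⟩ := dU.bdd
  have hMs : ∀ t ∈ Set.Icc (0 : ℝ) T, ∀ x, ‖U (t, x)‖ ^ 2 ∈ Set.Icc (0 : ℝ) (M ^ 2) := fun t ht x =>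
    ⟨by positivity, pow_le_pow_left₀ (norm_nonneg _) (hM t ht x) 2⟩
  obtain ⟨b0, hb0⟩ := (isCompact_Icc (a := (0 : ℝ)) (b := M ^ 2)).exists_bound_of_continuousOn
    hβ.continuous.continuousOn
  have hb00 : 0 ≤ b0 := (norm_nonneg _).trans (hb0 0 ⟨le_rfl, by positivity⟩)
  obtain ⟨b1, hb1⟩ := (isCompact_Icc (a := (0 : ℝ)) (b := M ^ 2)).exists_bound_of_continuousOn
    (hβ.continuous_deriv (by simp)).continuousOn
  have hb10 : 0 ≤ b1 := (norm_nonneg _).trans (hb1 0 ⟨le_rfl, by positivity⟩)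
  have dBU : Dec T (fun p => β (‖U p‖ ^ 2) • U p) := by
    refine dU.dom b0 hb00 fun t ht x => ?_
    rw [norm_smul]
    exact mul_le_mul_of_nonneg_right (hb0 _ (hMs t ht x)) (norm_nonneg _)
  have dUt : Dec T Ut := by
    have h1 : Dec T (fun p => Complex.I * (∑ i, U2 i p)) :=
      (Dec.sum Finset.univ dU2).dom 1 zero_le_one fun t _ x => by simp
    have h2 : Dec T (fun p => - (Complex.I * (β (‖U p‖ ^ 2) • U p))) :=
      dBU.dom 1 zero_le_one fun t _ x => by simp
    refine (h1.add h2).dom 1 zero_le_one fun t ht x => ?_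
    rw [hUtZ t ht.1 x, hZ, one_mul, ← sub_eq_add_neg]
  have dUit : ∀ i, Dec T (fun p => fderiv ℝ Ut p (0, e i)) := by
    intro i
    have hN : ∀ p, HasFDerivAt (fun q => ‖U q‖ ^ 2) (2 • (innerSL ℝ (U p)).comp (fderiv ℝ U p)) p :=
      fun p => (dfU p).hasFDerivAt.norm_sq
    have hBN : ∀ p, HasFDerivAt (fun q => β (‖U q‖ ^ 2))
        (deriv β (‖U p‖ ^ 2) • (2 • (innerSL ℝ (U p)).comp (fderiv ℝ U p))) p := fun p =>
      ((hβ.differentiable (by simp) _).hasDerivAt).comp_hasFDerivAt p (hN p)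
    have hZd : ∀ p, fderiv ℝ Z p (0, e i) = Complex.I * (∑ j, fderiv ℝ (U2 j) p (0, e i))
        - Complex.I * (β (‖U p‖ ^ 2) • U1 i p
          + (deriv β (‖U p‖ ^ 2) * (2 * inner ℝ (U p) (U1 i p))) • U p) := by
      intro p
      have hs : HasFDerivAt (fun q => ∑ j, U2 j q) (∑ j, fderiv ℝ (U2 j) p) p :=
        HasFDerivAt.fun_sum fun j _ => (dfU2 j p).hasFDerivAt
      have := ((hs.const_mul Complex.I).sub
        (((hBN p).smul (dfU p).hasFDerivAt).const_mul Complex.I)).fderiv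
      have h2 : fderiv ℝ Z p = _ := this
      rw [h2]
      simp [hU1]
      ring
    have h1 : Dec T (fun p => Complex.I * (∑ j, fderiv ℝ (U2 j) p (0, e i))) :=
      (Dec.sum Finset.univ fun j => ((dSU2 j).dir (sU2 j) (e i)).dec).dom 1 zero_le_one
        fun t _ x => by simp
    have h2 : Dec T (fun p => -(Complex.I * (β (‖U p‖ ^ 2) • U1 i p
          + (deriv β (‖U p‖ ^ 2) * (2 * inner ℝ (U p) (U1 i p))) • U p))) := by
      refine (dU1 i).dom (b0 + b1 * (2 * M) * M) (by positivity) fun t ht x => ?_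
      rw [norm_neg, norm_mul, Complex.norm_I, one_mul, add_mul]
      refine (norm_add_le _ _).trans (add_le_add ?_ ?_)
      · rw [norm_smul]
        exact mul_le_mul_of_nonneg_right (hb0 _ (hMs t ht x)) (norm_nonneg _)
      · rw [norm_smul, norm_mul, norm_mul, Real.norm_two]
        have h3 : ‖(inner ℝ (U (t, x)) (U1 i (t, x)) : ℝ)‖ ≤ M * ‖U1 i (t, x)‖ :=
          (norm_inner_le_norm _ _).trans
            (mul_le_mul_of_nonneg_right (hM t ht x) (norm_nonneg _))
        calc _ ≤ b1 * (2 * (M * ‖U1 i (t, x)‖)) * M := by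
              gcongr
              · exact hb1 _ (hMs t ht x)
              · exact hM t ht x
          _ = _ := by ring
    refine (h1.add h2).dom 1 zero_le_one fun t ht x => ?_
    have hZdf : Differentiable ℝ Z := by
      intro p
      have hs : DifferentiableAt ℝ (fun q => ∑ j, U2 j q) p :=
        DifferentiableAt.fun_sum fun j _ => dfU2 j p
      exact (hs.const_mul Complex.I).sub
        (((hBN p).differentiableAt.smul (dfU p)).const_mul Complex.I)
    have : fderiv ℝ Ut (t, x) (0, e i) = fderiv ℝ Z (t, x) (0, e i) := by
      rw [← slice_fderiv dfUt, ← slice_fderiv hZdf]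
      congr 2
      ext y; exact hUtZ t ht.1 y
    rw [this, hZd, one_mul, ← sub_eq_add_neg]
  -- the conserved quantity
  have hβc : Continuous β := hβ.continuous
  have hBc : Continuous B := continuous_iff_continuousAt.2 fun t => (hB t).continuousAt
  have cU := sU.continuous
  have cUt := sUt.continuous
  have cU1 : ∀ i, Continuous (U1 i) := fun i => (sU1 i).continuous
  have cU2 : ∀ i, Continuous (U2 i) := fun i => (sU2 i).continuous
  have cUit : ∀ i, Continuous (fun p => fderiv ℝ Ut p (0, e i)) := fun i =>
    (smooth_dir sUt _).continuous
  have dInner : ∀ {A A' : ℝ × EuclideanSpace ℝ (Fin d) → ℂ}, Dec T A → Dec T A' →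
      Dec T (fun p => (inner ℝ (A p) (A' p) : ℝ)) := fun hA hA' =>
    hA.mul hA' fun t _ x => norm_inner_le_norm _ _
  have dSq : ∀ {A : ℝ × EuclideanSpace ℝ (Fin d) → ℂ}, Dec T A → Dec T (fun p => ‖A p‖ ^ 2) :=
    fun hA => hA.mul hA fun t _ x => by rw [norm_pow, norm_norm, sq]
  have dB : Dec T (fun p => B (‖U p‖ ^ 2)) := by
    refine (dSq dU).dom b0 hb00 fun t ht x => ?_
    have := (convex_Icc (0 : ℝ) (M ^ 2)).norm_image_sub_le_of_norm_hasDerivWithin_le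
      (f := B) (f' := β) (fun x _ => (hB x).hasDerivWithinAt) hb0 (x := 0) (y := ‖U (t, x)‖ ^ 2)
      ⟨le_rfl, by positivity⟩ (hMs t ht x)
    simpa [hB0] using this
  have dH : Dec T (fun p => ‖U p‖ ^ 2 + ∑ i, ‖U1 i p‖ ^ 2) :=
    (dSq dU).add (Dec.sum Finset.univ fun i => dSq (dU1 i))
  have cH : Continuous (fun p => ‖U p‖ ^ 2 + ∑ i, ‖U1 i p‖ ^ 2) := by fun_prop
  have cB : Continuous (fun p => B (‖U p‖ ^ 2)) := by fun_prop
  set V' : ℝ × EuclideanSpace ℝ (Fin d) → ℝ := fun p =>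
    2 * inner ℝ (U p) (Ut p) + ∑ i, 2 * inner ℝ (U1 i p) (fderiv ℝ Ut p (0, e i))
      + 2 * inner ℝ (β (‖U p‖ ^ 2) • U p) (Ut p) with hV'
  have cBU : Continuous (fun p => β (‖U p‖ ^ 2) • U p) := by fun_prop
  have cV' : Continuous V' := by
    refine Continuous.add (Continuous.add ?_ ?_) ?_
    · exact continuous_const.mul (cU.inner cUt)
    · exact continuous_finsetSum _ fun i _ => continuous_const.mul ((cU1 i).inner (cUit i))
    · exact continuous_const.mul (cBU.inner cUt)
  have d2 : ∀ {A : ℝ × EuclideanSpace ℝ (Fin d) → ℝ}, Dec T A → Dec T (fun p => 2 * A p) :=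
    fun hA => hA.dom 2 zero_le_two fun t _ x => by rw [norm_mul, Real.norm_two]
  have dV' : Dec T V' :=
    ((d2 (dInner dU dUt)).add (Dec.sum Finset.univ fun i => d2 (dInner (dU1 i) (dUit i)))).add
      (d2 (dInner dBU dUt))
  have hder : ∀ t x, HasDerivAt (fun s => ‖U (s, x)‖ ^ 2 + ∑ i, ‖U1 i (s, x)‖ ^ 2
      + B (‖U (s, x)‖ ^ 2)) (V' (t, x)) t := by
    intro t x
    have h1 := (slice_hasDerivAt dfU t x).norm_sq
    have h2 : ∀ i, HasDerivAt (fun s => ‖U1 i (s, x)‖ ^ 2)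
        (2 * inner ℝ (U1 i (t, x)) (fderiv ℝ Ut (t, x) (0, e i))) t := fun i => by
      rw [← hsymm]; exact (slice_hasDerivAt (dfU1 i) t x).norm_sq
    have h3 := (hB (‖U (t, x)‖ ^ 2)).comp t h1
    have h4 := (h1.add (HasDerivAt.fun_sum (u := Finset.univ) fun i _ => h2 i)).add h3
    convert! h4 using 1
    simp only [hV', inner_smul_left]
    simp
    ring
  have hzero : ∀ t ∈ Set.Icc (0 : ℝ) T, ∫ x, V' (t, x) = 0 := by
    intro t ht
    have iA : ∀ {A A' : ℝ × EuclideanSpace ℝ (Fin d) → ℂ}, Dec T A → Dec T A' → Continuous A →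
        Continuous A' → Integrable (fun x => (inner ℝ (A (t, x)) (A' (t, x)) : ℝ)) :=
      fun hA hA' cA cA' => (dInner hA hA').integrable (cA.inner cA') ht
    have i1 := iA dU dUt cU cUt
    have i2 := fun i => iA (dU1 i) (dUit i) (cU1 i) (cUit i)
    have i3 := iA dBU dUt cBU cUt
    have i4 := fun i => iA (dU2 i) dUt (cU2 i) cUt
    have hI : ∀ i, ∫ x, inner ℝ (U1 i (t, x)) (fderiv ℝ Ut (t, x) (0, e i))
        = - ∫ x, inner ℝ (U2 i (t, x)) (Ut (t, x)) := fun i =>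
      ibp ((sU1 i).of_le (by simp)) (sUt.of_le (by simp)) (e i) (dU1 i) dUt (dU2 i) (dUit i) ht
    have dI : ∀ {A : ℝ × EuclideanSpace ℝ (Fin d) → ℂ}, Dec T A →
        Dec T (fun p => Complex.I * A p) :=
      fun hA => hA.dom 1 zero_le_one fun t _ x => by simp
    have hfI : ∀ i p, fderiv ℝ (fun q => Complex.I * U1 i q) p (0, e i)
        = Complex.I * U2 i p := by
      intro i p
      have := ((dfU1 i p).hasFDerivAt.const_mul Complex.I).fderiv
      rw [this]; simp [hU2]
    have hJ : ∀ i, ∫ x, inner ℝ (U (t, x)) (Complex.I * U2 i (t, x)) = (0 : ℝ) := by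
      intro i
      have := ibp (W := fun q => Complex.I * U1 i q) (sU.of_le (by simp))
        ((contDiff_const.mul (sU1 i)).of_le (by simp)) (e i) dU (dI (dU1 i)) (dU1 i)
        (by simpa only [hfI] using dI (dU2 i)) ht
      simp only [hfI] at this
      rw [this]
      have e0 : ∀ x, (inner ℝ (fderiv ℝ U (t, x) (0, e i)) (Complex.I * U1 i (t, x)) : ℝ) = 0 :=
        fun x => inner_I_self (U1 i (t, x))
      simp only [e0, integral_zero, neg_zero]
    have i5 := fun i => iA dU (dI (dU2 i)) cU (continuous_const.mul (cU2 i))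
    have hK : ∫ x, inner ℝ (U (t, x)) (Ut (t, x)) = (0 : ℝ) := by
      have e0 : ∀ x, (inner ℝ (U (t, x)) (Ut (t, x)) : ℝ)
          = ∑ i, inner ℝ (U (t, x)) (Complex.I * U2 i (t, x)) := by
        intro x
        rw [hUtZ t ht.1 x]
        simp only [hZ]
        rw [inner_sub_right, Finset.mul_sum, inner_sum, mul_smul_comm, inner_smul_right,
          inner_I_self, mul_zero, sub_zero]
      simp only [e0]
      rw [integral_finsetSum _ fun i _ => i5 i]
      simp only [hJ, Finset.sum_const_zero]
    have hL : ∀ x, (inner ℝ (β (‖U (t, x)‖ ^ 2) • U (t, x)) (Ut (t, x)) : ℝ)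
        = ∑ i, inner ℝ (U2 i (t, x)) (Ut (t, x)) := by
      intro x
      have e1 : β (‖U (t, x)‖ ^ 2) • U (t, x) = ∑ i, U2 i (t, x) + Complex.I * Ut (t, x) := by
        rw [heq t ht.1 x, Complex.real_smul]; ring
      rw [e1, inner_add_left, inner_I_self', add_zero, sum_inner]
    simp only [hV', hL]
    rw [integral_add, integral_add, integral_const_mul, hK, integral_finsetSum,
      integral_const_mul, integral_finsetSum _ fun i _ => i4 i]
    · simp only [integral_const_mul, hI, Finset.mul_sum]
      rw [mul_zero, zero_add, ← Finset.sum_add_distrib]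
      simp
    · exact fun i _ => (i2 i).const_mul 2
    · exact i1.const_mul 2
    · exact integrable_finsetSum _ fun i _ => (i2 i).const_mul 2
    · exact (i1.const_mul 2).add (integrable_finsetSum _ fun i _ => (i2 i).const_mul 2)
    · exact (integrable_finsetSum _ fun i _ => i4 i).const_mul 2
  have main := conserve hT.le (cH.add cB) cV' hder (dH.add dB) dV' hzero
  have hfd' : ∀ t x i, fderiv ℝ (u t) x (EuclideanSpace.single i 1) = U1 i (t, x) := hfd
  simp only [hfd']
  exact ⟨fun t ht => dH.integrable cH ht, fun t ht => dB.integrable cB ht, main⟩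

end

/-- Orbital stability of the zero solution of the NLS when the primitive `B` of `β`
is nonnegative on `[0,∞)`. -/
theorem orbital_stability_of_zero
    {d : ℕ} (hd : 1 ≤ d)
    -- β is smooth with β(0) = 0
    (β : ℝ → ℝ) (hβ : ContDiff ℝ (⊤ : ℕ∞) β) (hβ0 : β 0 = 0)
    -- growth condition with exponent p < d*
    (p : ℝ) (hp : 3 ≤ d → p < ((d : ℝ) + 2) / ((d : ℝ) - 2)) (C : ℕ → ℝ)
    (hgrowth : ∀ n : ℕ, ∀ t : ℝ, 1 ≤ t →
      |iteratedDeriv n (fun s => β (s ^ 2) * s) t| ≤ C n * t ^ (p - (n : ℝ)))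
    -- B is the primitive of β with B(0) = 0, and B ≥ 0 on [0,∞)
    (B : ℝ → ℝ) (hB : ∀ t, HasDerivAt B (β t) t) (hB0 : B 0 = 0)
    (hBnonneg : ∀ t : ℝ, 0 ≤ t → 0 ≤ B t) :
    -- conclusion: orbital stability of 0
    ∀ ε > 0, ∃ δ > 0, ∀ u : ℝ → EuclideanSpace ℝ (Fin d) → ℂ,
      IsClassicalSolution β u →
      H1norm (u 0) < δ →
      ∀ t : ℝ, 0 ≤ t → H1norm (u t) < ε := by
  have hg0 : ∀ t : ℝ, 1 ≤ t → |β (t ^ 2) * t| ≤ C 0 * t ^ p := by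
    intro t ht
    have h := hgrowth 0 t ht
    simpa only [iteratedDeriv_zero, Nat.cast_zero, sub_zero] using h
  obtain ⟨Q, hQ, hpot⟩ := potential_bound hd β hβ.continuous p hp (C 0) hg0 B hB hB0 hBnonneg
  intro ε hε
  have hs1 : 1 ≤ Real.sqrt (1 + Q) := Real.one_le_sqrt.2 (by linarith)
  have hs0 : 0 < Real.sqrt (1 + Q) := by linarith
  refine ⟨min 1 (ε / Real.sqrt (1 + Q)), lt_min one_pos (div_pos hε hs0), ?_⟩
  intro u hu hδ t ht
  have hδ1 : H1norm (u 0) ≤ 1 := (hδ.trans_le (min_le_left _ _)).le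
  have hδ2 : Real.sqrt (1 + Q) * H1norm (u 0) < ε := by
    have h := hδ.trans_le (min_le_right _ _)
    rw [lt_div_iff₀ hs0] at h
    linarith
  have hn0 : ∀ g : EuclideanSpace ℝ (Fin d) → ℂ, 0 ≤ H1norm g := fun g => Real.sqrt_nonneg _
  have hsq : ∀ g : EuclideanSpace ℝ (Fin d) → ℂ, H1norm g ^ 2 = ∫ x,
      (‖g x‖ ^ 2 + ∑ i : Fin d, ‖fderiv ℝ g x (EuclideanSpace.single i 1)‖ ^ 2) := fun g =>
    Real.sq_sqrt (integral_nonneg fun x => by positivity)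
  rcases ht.eq_or_lt with rfl | ht
  · have := hn0 (u 0)
    nlinarith
  obtain ⟨hI, hJ, hE⟩ := energy β hβ B hB hB0 u hu t ht
  have m0 : (0 : ℝ) ∈ Set.Icc (0 : ℝ) t := ⟨le_rfl, ht.le⟩
  have mt : t ∈ Set.Icc (0 : ℝ) t := ⟨ht.le, le_rfl⟩
  rw [integral_add (hI t mt) (hJ t mt), integral_add (hI 0 m0) (hJ 0 m0), ← hsq, ← hsq] at hE
  have hc : ContDiff ℝ 1 (u 0) := by
    have h : ContDiff ℝ (⊤ : ℕ∞) (u 0) := hu.smooth.comp (contDiff_prodMk_right (0 : ℝ))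
    exact h.of_le (WithTop.coe_le_coe.2 (le_top : (1 : ℕ∞) ≤ ⊤))
  have hp0 := hpot (u 0) hc (hI 0 m0) hδ1
  have hBt : 0 ≤ ∫ x, B (‖u t x‖ ^ 2) := integral_nonneg fun x => hBnonneg _ (by positivity)
  have hle : H1norm (u t) ≤ Real.sqrt (1 + Q) * H1norm (u 0) := by
    refine abs_le_of_sq_le_sq' ?_ (mul_nonneg hs0.le (hn0 _)) |>.2
    rw [mul_pow, Real.sq_sqrt (by linarith)]
    nlinarith
  exact hle.trans_lt hδ2
end

section
/- Let d ≥ 1, ω ∈ ℝ, and let β : ℝ → ℝ be C^∞. If φ : ℝ^d → ℝ is a twice continuously differentiable function satisfying Δφ(x) = ωφ(x) + β(φ(x)²)φ(x) for all x ∈ ℝ^d, then φ is C^∞ on ℝ^d. -/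
section aux

open MeasureTheory Set Metric

variable {d : ℕ}

/-- Derivative of the averaged function. -/
lemma avg_hasFDerivAt {F : Type} [NormedAddCommGroup F] [NormedSpace ℝ F] [CompleteSpace F]
    {K : Set (ℝ × EuclideanSpace ℝ (Fin d))} (hK : IsCompact K)
    {a : ℝ × EuclideanSpace ℝ (Fin d) → ℝ} (ha : Continuous a)
    {g : EuclideanSpace ℝ (Fin d) → F} (hg : ContDiff ℝ 1 g) (x : EuclideanSpace ℝ (Fin d)) :
    HasFDerivAt (fun x => ∫ p in K, a p • g (x - p.1 • p.2))
      (∫ p in K, a p • fderiv ℝ g (x - p.1 • p.2)) x := by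
  have hg0 : Continuous g := hg.continuous
  have hg1 : Continuous (fderiv ℝ g) := hg.continuous_fderiv one_ne_zero
  have hc : Continuous (fun q : EuclideanSpace ℝ (Fin d) × (ℝ × EuclideanSpace ℝ (Fin d)) =>
      a q.2 • fderiv ℝ g (q.1 - q.2.1 • q.2.2)) := by fun_prop
  obtain ⟨C, hC⟩ := ((isCompact_closedBall x 1).prod hK).exists_bound_of_continuousOn
    hc.continuousOn
  have hmeas := hK.measurableSet
  refine hasFDerivAt_integral_of_dominated_of_fderiv_le (bound := fun _ => C)
    (F' := fun x p => a p • fderiv ℝ g (x - p.1 • p.2))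
    (closedBall_mem_nhds x one_pos) ?_ ?_ ?_ ?_ ?_ ?_
  · refine Filter.Eventually.of_forall fun y => ?_
    refine Continuous.aestronglyMeasurable ?_
    fun_prop
  · refine ContinuousOn.integrableOn_compact hK (Continuous.continuousOn ?_)
    fun_prop
  · refine ContinuousOn.aestronglyMeasurable_of_isCompact (Continuous.continuousOn ?_) hK hmeas
    fun_prop
  · refine (ae_restrict_iff' hmeas).2 (Filter.Eventually.of_forall fun p hp y hy => ?_)
    exact hC (y, p) ⟨hy, hp⟩
  · exact continuousOn_const.integrableOn_compact hK
  · refine Filter.Eventually.of_forall fun p y hy => ?_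
    have h1 : HasFDerivAt g (fderiv ℝ g (y - p.1 • p.2)) (y - p.1 • p.2) :=
      ((hg.differentiable one_ne_zero) _).hasFDerivAt
    have h2 := (h1.comp y ((hasFDerivAt_id y).sub_const (p.1 • p.2))).const_smul (a p)
    rw [ContinuousLinearMap.comp_id] at h2
    exact h2

lemma avg_contDiff (n : ℕ)
    {K : Set (ℝ × EuclideanSpace ℝ (Fin d))} (hK : IsCompact K)
    {a : ℝ × EuclideanSpace ℝ (Fin d) → ℝ} (ha : Continuous a) :
    ∀ {F : Type} [NormedAddCommGroup F] [NormedSpace ℝ F] [CompleteSpace F]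
    {g : EuclideanSpace ℝ (Fin d) → F} (_ : ContDiff ℝ n g),
    ContDiff ℝ n (fun x => ∫ p in K, a p • g (x - p.1 • p.2)) := by
  induction n with
  | zero =>
    intro F _ _ _ g hg
    have hg0 : Continuous g := hg.continuous
    refine contDiff_zero.2 (continuous_parametric_integral_of_continuous ?_ hK)
    fun_prop
  | succ n ih =>
    intro F _ _ _ g hg
    have h1 : ContDiff ℝ 1 g := hg.of_le (by norm_cast; omega)
    push_cast at hg ⊢
    have hf : fderiv ℝ (fun x => ∫ p in K, a p • g (x - p.1 • p.2)) =
        fun x => ∫ p in K, a p • fderiv ℝ g (x - p.1 • p.2) := by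
      ext1 x
      exact (avg_hasFDerivAt hK ha h1 x).fderiv
    rw [contDiff_succ_iff_fderiv]
    refine ⟨fun x => (avg_hasFDerivAt hK ha h1 x).differentiableAt, by simp, ?_⟩
    rw [hf]
    exact ih (contDiff_succ_iff_fderiv.1 hg).2.2

/-- Integration by parts against a scaled function. -/
lemma ibp_s3 {Ψ : EuclideanSpace ℝ (Fin d) → ℝ} (hΨ : ContDiff ℝ 1 Ψ) (hs : HasCompactSupport Ψ)
    {g : EuclideanSpace ℝ (Fin d) → ℝ} (hg : ContDiff ℝ 1 g)
    (x v : EuclideanSpace ℝ (Fin d)) (t : ℝ) :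
    ∫ y, (t * Ψ y) * fderiv ℝ g (x - t • y) v = ∫ y, fderiv ℝ Ψ y v * g (x - t • y) := by
  have hΨ0 := hΨ.continuous
  have hΨ1 : Continuous (fderiv ℝ Ψ) := hΨ.continuous_fderiv one_ne_zero
  have hg0 : Continuous g := hg.continuous
  have hg1 : Continuous (fderiv ℝ g) := hg.continuous_fderiv one_ne_zero
  have hs' : HasCompactSupport (fun y => fderiv ℝ Ψ y v) := hs.fderiv_apply ℝ v
  have hd : ∀ y, fderiv ℝ (fun y => g (x - t • y)) y v = - (t * fderiv ℝ g (x - t • y) v) := by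
    intro y
    have h1 : HasFDerivAt g (fderiv ℝ g (x - t • y)) (x - t • y) :=
      ((hg.differentiable one_ne_zero) _).hasFDerivAt
    have h2 := h1.comp y (((hasFDerivAt_id y).const_smul t).const_sub x)
    have h3 : fderiv ℝ (fun y => g (x - t • y)) y = _ := h2.fderiv
    rw [h3]
    simp
  have key := integral_mul_fderiv_eq_neg_fderiv_mul_of_integrable (μ := volume) (f := Ψ)
    (g := fun y => g (x - t • y)) (v := v) ?_ ?_ ?_ ?_ ?_
  · simp_rw [hd] at key
    rw [← neg_inj, ← key, ← integral_neg]
    congr 1; ext y; ring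
  · exact Continuous.integrable_of_hasCompactSupport (by fun_prop) hs'.mul_right
  · simp_rw [hd]
    exact Continuous.integrable_of_hasCompactSupport (by fun_prop) hs.mul_right
  · exact Continuous.integrable_of_hasCompactSupport (by fun_prop) hs.mul_right
  · exact fun y _ => hΨ.differentiable one_ne_zero y
  · intro y _
    have := hg.differentiable one_ne_zero
    fun_prop

/-- The scalar profile. -/
noncomputable def prof (s : ℝ) : ℝ := Real.smoothTransition (1 - s)

/-- Its antiderivative. -/
noncomputable def profI (s : ℝ) : ℝ := - (1/2) * ∫ u in (1:ℝ)..s, prof u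

lemma prof_contDiff {n : ℕ∞} : ContDiff ℝ n prof :=
  Real.smoothTransition.contDiff.comp (contDiff_const.sub contDiff_id)

lemma profI_deriv (s : ℝ) : HasDerivAt profI (- (1/2) * prof s) s := by
  have hc : Continuous prof := (prof_contDiff (n := 0)).continuous
  exact (intervalIntegral.integral_hasDerivAt_right (hc.intervalIntegrable _ _)
    (hc.stronglyMeasurableAtFilter _ _) hc.continuousAt).const_mul _

lemma prof_zero {s : ℝ} (hs : 1 ≤ s) : prof s = 0 :=
  Real.smoothTransition.zero_of_nonpos (by linarith)

lemma profI_zero {s : ℝ} (hs : 1 ≤ s) : profI s = 0 := by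
  have : ∫ u in (1:ℝ)..s, prof u = ∫ u in (1:ℝ)..s, (0:ℝ) := by
    refine intervalIntegral.integral_congr fun u hu => ?_
    rw [uIcc_of_le hs] at hu
    exact prof_zero hu.1
  simp [profI, this]

lemma psi_supp {f : ℝ → ℝ} (hf : ∀ s, 1 ≤ s → f s = 0) (y : EuclideanSpace ℝ (Fin d))
    (hy : y ∉ closedBall (0 : EuclideanSpace ℝ (Fin d)) 1) : f (‖y‖ ^ 2) = 0 := by
  refine hf _ ?_
  rw [mem_closedBall_zero_iff, not_le] at hy
  nlinarith

lemma psi_compact {f : ℝ → ℝ} (hf : ∀ s, 1 ≤ s → f s = 0) :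
    HasCompactSupport (fun y : EuclideanSpace ℝ (Fin d) => f (‖y‖ ^ 2)) :=
  HasCompactSupport.intro (isCompact_closedBall 0 1) fun y hy => psi_supp hf y hy

lemma psiI_hasFDerivAt (y : EuclideanSpace ℝ (Fin d)) :
    HasFDerivAt (fun y : EuclideanSpace ℝ (Fin d) => profI (‖y‖ ^ 2))
      (- prof (‖y‖ ^ 2) • innerSL ℝ y) y := by
  have h1 : HasFDerivAt (fun y : EuclideanSpace ℝ (Fin d) => ‖y‖ ^ 2) (2 • innerSL ℝ y) y :=
    (hasStrictFDerivAt_norm_sq y).hasFDerivAt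
  have h2 := (profI_deriv (‖y‖ ^ 2)).comp_hasFDerivAt y h1
  have h3 : (-(1 / 2) * prof (‖y‖ ^ 2)) • 2 • innerSL ℝ y = - prof (‖y‖ ^ 2) • innerSL ℝ y := by
    module
  rw [h3] at h2
  exact h2

lemma psiI_contDiff :
    ContDiff ℝ 1 (fun y : EuclideanSpace ℝ (Fin d) => profI (‖y‖ ^ 2)) := by
  have hc : Continuous prof := (prof_contDiff (n := 0)).continuous
  rw [contDiff_one_iff_fderiv]
  refine ⟨fun y => (psiI_hasFDerivAt y).differentiableAt, ?_⟩
  have : fderiv ℝ (fun y : EuclideanSpace ℝ (Fin d) => profI (‖y‖ ^ 2)) =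
      fun y => - prof (‖y‖ ^ 2) • innerSL ℝ y := by
    ext1 y
    exact (psiI_hasFDerivAt y).fderiv
  rw [this]
  fun_prop

lemma psi_integral_pos :
    0 < ∫ y : EuclideanSpace ℝ (Fin d), prof (‖y‖ ^ 2) := by
  have hc : Continuous prof := (prof_contDiff (n := 0)).continuous
  refine Continuous.integral_pos_of_hasCompactSupport_nonneg_nonzero (x := 0) (by fun_prop)
    (psi_compact fun s => prof_zero) (fun y => Real.smoothTransition.nonneg _) ?_
  simp [prof]

lemma prod_split {f : ℝ × EuclideanSpace ℝ (Fin d) → ℝ} (hf : Continuous f)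
    (h0 : ∀ t y, y ∉ closedBall (0 : EuclideanSpace ℝ (Fin d)) 1 → f (t, y) = 0) :
    ∫ p in Icc (0:ℝ) 1 ×ˢ closedBall (0 : EuclideanSpace ℝ (Fin d)) 1, f p =
      ∫ t in Icc (0:ℝ) 1, ∫ y, f (t, y) := by
  have hK : IsCompact (Icc (0:ℝ) 1 ×ˢ closedBall (0 : EuclideanSpace ℝ (Fin d)) 1) :=
    isCompact_Icc.prod (isCompact_closedBall 0 1)
  rw [Measure.volume_eq_prod, setIntegral_prod]
  · congr 1; ext t
    exact setIntegral_eq_integral_of_forall_compl_eq_zero fun y hy => h0 t y hy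
  · exact hf.continuousOn.integrableOn_compact hK

lemma prod_split' {f : ℝ × EuclideanSpace ℝ (Fin d) → ℝ} (hf : Continuous f)
    (h0 : ∀ t y, y ∉ closedBall (0 : EuclideanSpace ℝ (Fin d)) 1 → f (t, y) = 0) :
    ∫ p in Icc (0:ℝ) 1 ×ˢ closedBall (0 : EuclideanSpace ℝ (Fin d)) 1, f p =
      ∫ y, ∫ t in Icc (0:ℝ) 1, f (t, y) := by
  have hK : IsCompact (Icc (0:ℝ) 1 ×ˢ closedBall (0 : EuclideanSpace ℝ (Fin d)) 1) :=
    isCompact_Icc.prod (isCompact_closedBall 0 1)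
  have hi : IntegrableOn f (Icc (0:ℝ) 1 ×ˢ closedBall (0 : EuclideanSpace ℝ (Fin d)) 1)
    (volume.prod volume) := hf.continuousOn.integrableOn_compact hK
  rw [Measure.volume_eq_prod, ← Measure.prod_restrict, integral_prod_symm]
  · refine setIntegral_eq_integral_of_forall_compl_eq_zero fun y hy => ?_
    simp [h0 _ y hy]
  · rwa [Measure.prod_restrict]

/-- The singular part gains one derivative. -/
lemma sing_contDiff (n : ℕ) (hn : 1 ≤ n) {g : EuclideanSpace ℝ (Fin d) → ℝ}
    (hg : ContDiff ℝ n g) :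
    ContDiff ℝ (n + 1) (fun x => ∫ p in Icc (0:ℝ) 1 ×ˢ closedBall (0 : EuclideanSpace ℝ (Fin d)) 1,
      (p.1 * profI (‖p.2‖ ^ 2)) • g (x - p.1 • p.2)) := by
  have hK : IsCompact (Icc (0:ℝ) 1 ×ˢ closedBall (0 : EuclideanSpace ℝ (Fin d)) 1) :=
    isCompact_Icc.prod (isCompact_closedBall 0 1)
  have hΨ := psiI_contDiff (d := d)
  have hΨ0 := hΨ.continuous
  have hΨ1 := hΨ.continuous_fderiv one_ne_zero
  have hg1 : ContDiff ℝ 1 g := hg.of_le (by exact_mod_cast hn)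
  have hgc := hg1.continuous
  have hgc1 := hg1.continuous_fderiv one_ne_zero
  have ha : Continuous (fun p : ℝ × EuclideanSpace ℝ (Fin d) => p.1 * profI (‖p.2‖ ^ 2)) :=
    continuous_fst.mul (hΨ0.comp continuous_snd)
  have hz : ∀ y v : EuclideanSpace ℝ (Fin d), y ∉ closedBall (0 : EuclideanSpace ℝ (Fin d)) 1 →
      fderiv ℝ (fun y : EuclideanSpace ℝ (Fin d) => profI (‖y‖ ^ 2)) y v = 0 := by
    intro y v hy
    rw [(psiI_hasFDerivAt y).fderiv]
    simp [psi_supp (fun s => prof_zero) y hy]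
  rw [contDiff_succ_iff_fderiv_apply]
  refine ⟨fun x => (avg_hasFDerivAt hK ha hg1 x).differentiableAt, by simp, fun v => ?_⟩
  have hf : (fun x => fderiv ℝ (fun x => ∫ p in Icc (0:ℝ) 1 ×ˢ
      closedBall (0 : EuclideanSpace ℝ (Fin d)) 1,
      (p.1 * profI (‖p.2‖ ^ 2)) • g (x - p.1 • p.2)) x v) =
      fun x => ∫ p in Icc (0:ℝ) 1 ×ˢ closedBall (0 : EuclideanSpace ℝ (Fin d)) 1,
        (fderiv ℝ (fun y : EuclideanSpace ℝ (Fin d) => profI (‖y‖ ^ 2)) p.2 v) •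
          g (x - p.1 • p.2) := by
    ext1 x
    rw [(avg_hasFDerivAt hK ha hg1 x).fderiv, ContinuousLinearMap.integral_apply]
    · simp only [smul_apply, smul_eq_mul]
      rw [prod_split, prod_split]
      · congr 1; ext t
        exact ibp_s3 hΨ (psi_compact fun s => profI_zero) hg1 x v t
      · exact ((hΨ1.comp continuous_snd).clm_apply continuous_const).mul (by fun_prop)
      · intro t y hy
        simp [hz y v hy]
      · exact ha.mul (by fun_prop)
      · intro t y hy
        simp [psi_supp (fun s => profI_zero) y hy]
    · refine ContinuousOn.integrableOn_compact hK (Continuous.continuousOn ?_)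
      exact ha.smul (by fun_prop)
  rw [hf]
  refine avg_contDiff n hK ?_ hg
  exact (hΨ1.comp continuous_snd).clm_apply continuous_const

lemma lap_ibp {φ : EuclideanSpace ℝ (Fin d) → ℝ} (hφ : ContDiff ℝ 2 φ)
    (x : EuclideanSpace ℝ (Fin d)) (t : ℝ) :
    ∫ y : EuclideanSpace ℝ (Fin d), (t * profI (‖y‖ ^ 2)) * lap φ (x - t • y) =
      ∫ y : EuclideanSpace ℝ (Fin d), - (prof (‖y‖ ^ 2) * fderiv ℝ φ (x - t • y) y) := by
  have hΨ := psiI_contDiff (d := d)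
  have hs := psi_compact (d := d) (fun s => profI_zero (s := s))
  have hs' := psi_compact (d := d) (fun s => prof_zero (s := s))
  have hc : Continuous prof := (prof_contDiff (n := 0)).continuous
  have hΨ0 := hΨ.continuous
  have hφ1 : ContDiff ℝ 1 (fderiv ℝ φ) := hφ.fderiv_right (by norm_num)
  have hp : ∀ i : Fin d, ContDiff ℝ 1 (fun y => fderiv ℝ φ y (EuclideanSpace.single i 1)) :=
    fun i => hφ1.clm_apply contDiff_const
  have hφc := hφ1.continuous
  have hpc : ∀ i : Fin d, Continuous
      (fderiv ℝ (fun y => fderiv ℝ φ y (EuclideanSpace.single i 1))) :=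
    fun i => (hp i).continuous_fderiv one_ne_zero
  simp only [lap, Finset.mul_sum]
  rw [integral_finsetSum]
  · have hr : ∀ y : EuclideanSpace ℝ (Fin d), - (prof (‖y‖ ^ 2) * fderiv ℝ φ (x - t • y) y) =
        ∑ i : Fin d, fderiv ℝ (fun y : EuclideanSpace ℝ (Fin d) => profI (‖y‖ ^ 2)) y
          (EuclideanSpace.single i 1) *
          fderiv ℝ φ (x - t • y) (EuclideanSpace.single i 1) := by
      intro y
      have hy : y = ∑ i : Fin d, y i • (EuclideanSpace.single i (1:ℝ)) := by
        simpa using ((EuclideanSpace.basisFun (Fin d) ℝ).sum_repr y).symm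
      rw [(psiI_hasFDerivAt y).fderiv]
      generalize fderiv ℝ φ (x - t • y) = L
      conv_lhs => rw [hy, map_sum, ← hy]
      rw [Finset.mul_sum, ← Finset.sum_neg_distrib]
      refine Finset.sum_congr rfl fun i _ => ?_
      have hin : inner ℝ y (EuclideanSpace.single i (1:ℝ)) = y i := by
        simp [EuclideanSpace.inner_single_right]
      simp [hin]
      ring
    simp_rw [hr]
    rw [integral_finsetSum]
    · refine Finset.sum_congr rfl fun i _ => ?_
      exact ibp_s3 hΨ hs (hp i) x (EuclideanSpace.single i 1) t
    · intro i _
      refine Continuous.integrable_of_hasCompactSupport ?_ (hs.fderiv_apply ℝ _).mul_right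
      have := hΨ.continuous_fderiv one_ne_zero
      fun_prop
  · intro i _
    refine Continuous.integrable_of_hasCompactSupport ?_ (hs.mul_left.mul_right)
    have := hpc i
    fun_prop

lemma representation {φ : EuclideanSpace ℝ (Fin d) → ℝ} (hφ : ContDiff ℝ 2 φ)
    (x : EuclideanSpace ℝ (Fin d)) :
    (∫ y : EuclideanSpace ℝ (Fin d), prof (‖y‖ ^ 2)) * φ x =
      (∫ y : EuclideanSpace ℝ (Fin d), prof (‖y‖ ^ 2) * φ (x - y)) -
      ∫ p in Icc (0:ℝ) 1 ×ˢ closedBall (0 : EuclideanSpace ℝ (Fin d)) 1,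
        (p.1 * profI (‖p.2‖ ^ 2)) • lap φ (x - p.1 • p.2) := by
  have hΨ := psiI_contDiff (d := d)
  have hs := psi_compact (d := d) (fun s => profI_zero (s := s))
  have hs' := psi_compact (d := d) (fun s => prof_zero (s := s))
  have hc : Continuous prof := (prof_contDiff (n := 0)).continuous
  have hΨ0 := hΨ.continuous
  have hφ1 : ContDiff ℝ 1 (fderiv ℝ φ) := hφ.fderiv_right (by norm_num)
  have hφ0 := hφ.continuous
  have hφc := hφ1.continuous
  have hlap : Continuous (lap φ) := by
    unfold lap
    refine continuous_finsetSum _ fun i _ => ?_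
    have : ContDiff ℝ 1 (fun y => fderiv ℝ φ y (EuclideanSpace.single i 1)) :=
      hφ1.clm_apply contDiff_const
    exact (this.continuous_fderiv one_ne_zero).clm_apply continuous_const
  have ha : Continuous (fun p : ℝ × EuclideanSpace ℝ (Fin d) => p.1 * profI (‖p.2‖ ^ 2)) :=
    continuous_fst.mul (hΨ0.comp continuous_snd)
  have e1 : ∫ p in Icc (0:ℝ) 1 ×ˢ closedBall (0 : EuclideanSpace ℝ (Fin d)) 1,
        (p.1 * profI (‖p.2‖ ^ 2)) • lap φ (x - p.1 • p.2) =
      ∫ p in Icc (0:ℝ) 1 ×ˢ closedBall (0 : EuclideanSpace ℝ (Fin d)) 1,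
        - (prof (‖p.2‖ ^ 2) * fderiv ℝ φ (x - p.1 • p.2) p.2) := by
    simp only [smul_eq_mul]
    rw [prod_split, prod_split]
    · congr 1; ext t
      exact lap_ibp hφ x t
    · fun_prop
    · intro t y hy
      simp [psi_supp (fun s => prof_zero) y hy]
    · exact ha.mul (by fun_prop)
    · intro t y hy
      simp [psi_supp (fun s => profI_zero) y hy]
  rw [e1, prod_split' (by fun_prop)
    (fun t y hy => by simp [psi_supp (fun s => prof_zero) y hy])]
  have e2 : ∀ y : EuclideanSpace ℝ (Fin d),
      ∫ t in Icc (0:ℝ) 1, - (prof (‖y‖ ^ 2) * fderiv ℝ φ (x - t • y) y) =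
      prof (‖y‖ ^ 2) * φ (x - y) - prof (‖y‖ ^ 2) * φ x := by
    intro y
    rw [integral_Icc_eq_integral_Ioc, ← intervalIntegral.integral_of_le zero_le_one]
    rw [intervalIntegral.integral_eq_sub_of_hasDerivAt
      (f := fun t : ℝ => prof (‖y‖ ^ 2) * φ (x - t • y))]
    · simp
    · intro t _
      have h1 : HasFDerivAt φ (fderiv ℝ φ (x - t • y)) (x - t • y) :=
        ((hφ.differentiable two_ne_zero) _).hasFDerivAt
      have h2 : HasDerivAt (fun t : ℝ => x - t • y) (-y) t := by
        simpa using ((hasDerivAt_id t).smul_const y).const_sub x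
      have h3 := (h1.comp_hasDerivAt t h2).const_mul (prof (‖y‖ ^ 2))
      simpa using h3
    · refine Continuous.intervalIntegrable ?_ _ _
      fun_prop
  simp_rw [e2]
  rw [integral_sub, integral_mul_const]
  · ring
  · exact Continuous.integrable_of_hasCompactSupport (by fun_prop) hs'.mul_right
  · exact Continuous.integrable_of_hasCompactSupport (by fun_prop) hs'.mul_right

lemma reg_contDiff {φ : EuclideanSpace ℝ (Fin d) → ℝ} (hφ : Continuous φ) (n : ℕ∞) :
    ContDiff ℝ n (fun x => ∫ y : EuclideanSpace ℝ (Fin d), prof (‖y‖ ^ 2) * φ (x - y)) := by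
  have h : ContDiff ℝ n (fun y : EuclideanSpace ℝ (Fin d) => prof (‖y‖ ^ 2)) :=
    prof_contDiff.comp (contDiff_norm_sq ℝ)
  exact (psi_compact (d := d) (fun s => prof_zero (s := s))).contDiff_convolution_left
    (ContinuousLinearMap.mul ℝ ℝ) (μ := volume) h hφ.locallyIntegrable

end aux

/-- Elliptic regularity for the ground state equation: a `C²` solution of
`Δφ = ωφ + β(φ²)φ` on `ℝ^d` is smooth. -/
theorem ground_state_is_smooth
    {d : ℕ} (hd : 1 ≤ d) (ω : ℝ)
    (β : ℝ → ℝ) (hβ : ContDiff ℝ (⊤ : ℕ∞) β)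
    (φ : EuclideanSpace ℝ (Fin d) → ℝ) (hφ : ContDiff ℝ 2 φ)
    (heq : ∀ x, lap φ x = ω * φ x + β ((φ x) ^ 2) * φ x) :
    ContDiff ℝ (⊤ : ℕ∞) φ := by
  have main : ∀ n : ℕ, ContDiff ℝ ((n + 2 : ℕ) : ℕ∞) φ := by
    intro n
    induction n with
    | zero => simpa using hφ
    | succ n ih =>
      have hβn : ContDiff ℝ ((n + 2 : ℕ) : ℕ∞) β := hβ.of_le (by exact_mod_cast le_top)
      have hg : ContDiff ℝ ((n + 2 : ℕ) : ℕ∞) (lap φ) := by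
        have : lap φ = fun x => ω * φ x + β ((φ x) ^ 2) * φ x := funext heq
        rw [this]
        exact (contDiff_const.mul ih).add ((hβn.comp (ih.pow 2)).mul ih)
      have h1 := sing_contDiff (n + 2) (by omega) hg
      have h2 := reg_contDiff hφ.continuous ((n + 2 + 1 : ℕ) : ℕ∞)
      have hpos := psi_integral_pos (d := d)
      have hrep : φ = fun x => (∫ y : EuclideanSpace ℝ (Fin d), prof (‖y‖ ^ 2))⁻¹ *
          ((∫ y : EuclideanSpace ℝ (Fin d), prof (‖y‖ ^ 2) * φ (x - y)) -
          ∫ p in Set.Icc (0:ℝ) 1 ×ˢ Metric.closedBall (0 : EuclideanSpace ℝ (Fin d)) 1,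
            (p.1 * profI (‖p.2‖ ^ 2)) • lap φ (x - p.1 • p.2)) := by
        ext x
        rw [← representation hφ x, inv_mul_cancel_left₀ hpos.ne']
      have h3 : ContDiff ℝ ((n + 2 + 1 : ℕ) : ℕ∞) _ :=
        (contDiff_const (c := (∫ y : EuclideanSpace ℝ (Fin d), prof (‖y‖ ^ 2))⁻¹)).mul (h2.sub h1)
      rw [← hrep] at h3
      exact h3.of_le (by norm_cast)
  rw [contDiff_infty]
  intro n
  exact (main n).of_le (by norm_cast; omega)
end

section
/- Let d ≥ 1, ω > 0, and let β : ℝ → ℝ be C^∞ with β(0) = 0. Let φ : ℝ^d → ℝ be a positive, radial, twice continuously differentiable solution of Δφ = ωφ + β(φ²)φ on ℝ^d with φ(x) → 0 as |x| → ∞. Then for every multi-index α there exists a constant C_α > 0 such that |∂^α φ(x)| ≤ C_α (1 + |x|)^{−(d−1)/2} e^{−√ω |x|} for all x ∈ ℝ^d. -/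
open scoped Topology

theorem gs_param {d : ℕ} (n : ℕ) : ∀ {F : Type} [NormedAddCommGroup F] [NormedSpace ℝ F]
    [CompleteSpace F] (G : EuclideanSpace ℝ (Fin d) × ℝ → F) (_ : ContDiff ℝ n G),
    ContDiff ℝ n (fun x => ∫ t in (0:ℝ)..1, G (x, t)) := by
  induction n with
  | zero =>
    intro F _ _ _ G hG
    simp only [Nat.cast_zero, contDiff_zero] at hG ⊢
    exact intervalIntegral.continuous_parametric_intervalIntegral_of_continuous'
      (f := fun x t => G (x, t)) (by exact hG) 0 1
  | succ n ih =>
    intro F _ _ _ G hG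
    push_cast at hG ⊢
    obtain ⟨G', hG', hd⟩ := contDiff_succ_iff_hasFDerivAt.1 hG
    rw [contDiff_succ_iff_hasFDerivAt]
    let K : EuclideanSpace ℝ (Fin d) × ℝ → (EuclideanSpace ℝ (Fin d) →L[ℝ] F) := fun p =>
      (G' p).comp (ContinuousLinearMap.inl ℝ _ _)
    have hK : ContDiff ℝ n K := hG'.clm_comp contDiff_const
    refine ⟨fun x => ∫ t in (0:ℝ)..1, K (x, t), ih K hK, fun x => ?_⟩
    have hGc : Continuous G := hG.continuous
    have hKc : Continuous K := hK.continuous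
    obtain ⟨C, hC⟩ := ((isCompact_closedBall x 1).prod (isCompact_Icc (a := (0:ℝ)) (b := 1))).exists_bound_of_continuousOn hKc.continuousOn
    refine intervalIntegral.hasFDerivAt_integral_of_dominated_of_fderiv_le
      (F := fun x t => G (x,t)) (F' := fun x t => K (x,t)) (bound := fun _ => C)
      (Metric.closedBall_mem_nhds x one_pos) ?_ ?_ ?_ ?_ ?_ ?_
    · exact Filter.Eventually.of_forall fun y =>
        (hGc.comp (Continuous.prodMk_right y)).aestronglyMeasurable
    · exact (hGc.comp (Continuous.prodMk_right x)).intervalIntegrable _ _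
    · exact (hKc.comp (Continuous.prodMk_right x)).aestronglyMeasurable
    · refine Filter.Eventually.of_forall fun t ht y hy => hC (y,t) ⟨hy, ?_⟩
      rw [Set.uIoc_of_le zero_le_one] at ht
      exact ⟨ht.1.le, ht.2⟩
    · exact intervalIntegrable_const
    · refine Filter.Eventually.of_forall fun t ht y hy => ?_
      have := HasFDerivAt.comp (g := G) (f := fun e => (e, t)) y (hd (y,t)) (hasFDerivAt_prodMk_left y t)
      exact this

/-- Riccati type comparison. -/
theorem gs_riccati (k R M : ℝ) (f f' f'' a a' V : ℝ → ℝ)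
    (hf : ∀ r, R ≤ r → HasDerivAt f (f' r) r) (hf' : ∀ r, R ≤ r → HasDerivAt f' (f'' r) r)
    (ha : ∀ r, R ≤ r → HasDerivAt a (a' r) r)
    (hpos : ∀ r, 0 < f r) (hlim : Filter.Tendsto f Filter.atTop (𝓝 0))
    (hM : 0 < M) (haM : ∀ r, R ≤ r → a r ≤ M)
    (hak : ∀ r, R ≤ r → 0 < a r - 2 * k / r)
    (hode : ∀ r, R ≤ r → f'' r = V r * f r - 2 * k / r * f' r)
    (hV : ∀ r, R ≤ r → 0 ≤ V r - a r ^ 2 + a' r + 2 * k * a r / r) :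
    ∀ r, R ≤ r → f' r + a r * f r ≤ 0 := by
  intro r₁ hr₁
  by_contra hcon
  push Not at hcon
  set z : ℝ → ℝ := fun r => f' r + a r * f r with hz
  have hzd : ∀ r, R ≤ r → HasDerivAt z (f'' r + (a' r * f r + a r * f' r)) r := fun r hr =>
    (hf' r hr).add ((ha r hr).mul (hf r hr))
  set δ := z r₁ with hδ
  have hδ0 : 0 < δ := hcon
  have hge : ∀ r, r₁ ≤ r → δ ≤ z r := by
    intro b hb
    refine image_le_of_deriv_right_lt_deriv_boundary' (f := fun _ => δ) (f' := fun _ => 0)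
      (B := z) (B' := fun r => f'' r + (a' r * f r + a r * f' r)) (a := r₁) (b := b)
      continuousOn_const (fun x _ => hasDerivWithinAt_const _ _ _) le_rfl
      (fun x hx => (hzd x (hr₁.trans hx.1)).continuousAt.continuousWithinAt)
      (fun x hx => (hzd x (hr₁.trans hx.1)).hasDerivWithinAt) ?_ ⟨hb, le_rfl⟩
    intro x hx hxe
    have hx' := hr₁.trans hx.1
    have h1 := hV x hx'
    have h2 := hak x hx'
    rw [hode x hx']
    have h3 := mul_nonneg h1 (hpos x).le
    have h4 : 0 < (a x - 2 * k / x) * z x := mul_pos h2 (by rw [← hxe]; exact hδ0)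
    have : V x * f x - 2 * k / x * f' x + (a' x * f x + a x * f' x) =
      (a x - 2 * k / x) * z x + (V x - a x ^ 2 + a' x + 2 * k * a x / x) * f x := by
      simp only [hz]; ring
    rw [this]; linarith
  have hev : ∀ᶠ r in Filter.atTop, f r < δ / (2 * M) := hlim.eventually_lt_const (by positivity)
  obtain ⟨r₂, hr₂⟩ := Filter.eventually_atTop.1 hev
  set r₃ := max r₁ r₂
  have h13 : r₁ ≤ r₃ := le_max_left _ _
  have hder : ∀ r, r₃ ≤ r → δ / 2 ≤ f' r := by
    intro r hr
    have h1 := hge r (h13.trans hr)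
    have h2 := hr₂ r ((le_max_right _ _).trans hr)
    have h3 := haM r (hr₁.trans (h13.trans hr))
    have h4 : a r * f r ≤ M * f r := mul_le_mul_of_nonneg_right h3 (hpos r).le
    have h5 : M * f r ≤ δ / 2 := by
      rw [lt_div_iff₀ (by positivity)] at h2; linarith
    simp only [hz] at h1
    linarith
  have hmono : MonotoneOn (fun r => f r - δ / 2 * r) (Set.Ici r₃) := by
    refine monotoneOn_of_hasDerivWithinAt_nonneg (f' := fun r => f' r - δ / 2 * 1) (convex_Ici _) ?_ ?_ ?_
    · intro r hr
      have := ((hf r (hr₁.trans (h13.trans hr))).sub ((hasDerivAt_id r).const_mul (δ/2)))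
      exact this.continuousAt.continuousWithinAt
    · intro r hr
      rw [interior_Ici] at hr
      exact ((hf r (hr₁.trans (h13.trans hr.le))).sub ((hasDerivAt_id r).const_mul (δ/2))).hasDerivWithinAt
    · intro r hr
      rw [interior_Ici] at hr
      have := hder r hr.le
      linarith
  set r₄ := r₃ + 1/M
  have hr4 : r₃ ≤ r₄ := by simp only [r₄]; linarith [show 0 < 1 / M by positivity]
  have h := hmono (Set.mem_Ici.2 le_rfl) (Set.mem_Ici.2 hr4) hr4
  have h2 := hr₂ r₄ ((le_max_right _ _).trans hr4)
  have h3 := hpos r₃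
  have : δ / 2 * (r₄ - r₃) = δ / (2 * M) := by simp only [r₄]; field_simp; ring
  simp only at h
  nlinarith

/-- Elementary: if `β` is `C^1`, `β 0 = 0`, then `|β s| ≤ L s` on `[0,1]`. -/
theorem gs_beta (β : ℝ → ℝ) (hβ : ContDiff ℝ (⊤ : ℕ∞) β) (hβ0 : β 0 = 0) :
    ∃ L, 0 ≤ L ∧ ∀ s, 0 ≤ s → s ≤ 1 → |β s| ≤ L * s := by
  have hc : Continuous (deriv β) := hβ.continuous_deriv (by simp)
  obtain ⟨L, hL⟩ := (isCompact_Icc (a := (0:ℝ)) (b := 1)).exists_bound_of_continuousOn hc.continuousOn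
  refine ⟨max L 0, le_max_right _ _, fun s h0 h1 => ?_⟩
  have := (convex_Icc (0:ℝ) 1).norm_image_sub_le_of_norm_deriv_le (f := β) (C := L)
    (fun x _ => (hβ.differentiable (by simp)).differentiableAt) hL (x := 0) (y := s) ⟨le_rfl, zero_le_one⟩ ⟨h0, h1⟩
  rw [hβ0, sub_zero, sub_zero, Real.norm_eq_abs, Real.norm_eq_abs, abs_of_nonneg h0] at this
  exact this.trans (mul_le_mul_of_nonneg_right (le_max_left _ _) h0)

set_option maxHeartbeats 1000000 in
theorem gs_decay1 (k ω : ℝ) (hk : 0 ≤ k) (hω : 0 < ω) (β : ℝ → ℝ)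
    (hβ : ContDiff ℝ (⊤ : ℕ∞) β) (hβ0 : β 0 = 0) (f f' f'' : ℝ → ℝ)
    (hf : ∀ r, 0 < r → HasDerivAt f (f' r) r) (hf' : ∀ r, 0 < r → HasDerivAt f' (f'' r) r)
    (hpos : ∀ r, 0 < f r) (hlim : Filter.Tendsto f Filter.atTop (𝓝 0))
    (hode : ∀ r, 0 < r → f'' r = (ω + β (f r ^ 2)) * f r - 2 * k / r * f' r) :
    ∃ R C, 1 ≤ R ∧ 0 < C ∧ ∀ r, R ≤ r →
      f r ≤ C * ((1 + r) ^ (-k) * Real.exp (-(Real.sqrt ω) * r)) ∧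
      |f' r| ≤ C * ((1 + r) ^ (-k) * Real.exp (-(Real.sqrt ω) * r)) := by
  obtain ⟨L, hL0, hL⟩ := gs_beta β hβ hβ0
  set s := Real.sqrt ω with hs
  have hs0 : 0 < s := Real.sqrt_pos.2 hω
  have hs2 : s ^ 2 = ω := Real.sq_sqrt hω.le
  obtain ⟨m, hm⟩ : ∃ m, m = s / 2 := ⟨_, rfl⟩
  have hm0 : 0 < m := by rw [hm]; positivity
  have hm2 : m ^ 2 = ω / 4 := by rw [hm, div_pow, hs2]; norm_num
  -- potential eventually large
  have hVlim : Filter.Tendsto (fun r => β (f r ^ 2)) Filter.atTop (𝓝 0) := by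
    have h1 : Filter.Tendsto (fun r => f r ^ 2) Filter.atTop (𝓝 0) := by
      simpa using hlim.pow 2
    have h2 := (hβ.continuous.tendsto 0).comp h1
    rw [hβ0] at h2
    exact h2
  obtain ⟨r₀, hr₀⟩ := Filter.eventually_atTop.1
    ((hVlim.eventually_const_lt (show -(ω/2) < 0 by linarith)).and
      (hlim.eventually_lt_const (show (0:ℝ) < 1 by norm_num)))
  obtain ⟨R₁, hR₁⟩ : ∃ R₁, R₁ = max (max 1 r₀) (2 * k / m + 1) := ⟨_, rfl⟩
  have hR11 : 1 ≤ R₁ := by rw [hR₁]; exact (le_max_left _ _).trans (le_max_left _ _)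
  have hR1r : r₀ ≤ R₁ := by rw [hR₁]; exact (le_max_right _ _).trans (le_max_left _ _)
  have hR1k : 2 * k / m + 1 ≤ R₁ := by rw [hR₁]; exact le_max_right _ _
  have hA := gs_riccati k R₁ m f f' f'' (fun _ => m) (fun _ => 0) (fun r => ω + β (f r ^ 2))
    (fun r hr => hf r (by linarith)) (fun r hr => hf' r (by linarith))
    (fun r _ => hasDerivAt_const _ _) hpos hlim hm0 (fun _ _ => le_rfl)
    (fun r hr => by
      have h0 : 0 < r := by linarith
      have : 2 * k / m < r := by linarith
      rw [div_lt_iff₀ hm0] at this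
      rw [sub_pos, div_lt_iff₀ h0]; linarith)
    (fun r hr => hode r (by linarith))
    (fun r hr => by
      have h0 : 0 < r := by linarith
      have h1 := (hr₀ r (by linarith)).1
      have : 0 ≤ 2 * k * m / r := by positivity
      simp only [hm2]
      linarith)
  -- exponential decay
  have hanti : AntitoneOn (fun r => f r * Real.exp (m * r)) (Set.Ici R₁) := by
    have hd : ∀ r, R₁ ≤ r → HasDerivAt (fun r => f r * Real.exp (m * r))
        (f' r * Real.exp (m * r) + f r * (Real.exp (m * r) * (m * 1))) r := fun r hr =>
      (hf r (by linarith)).mul (((hasDerivAt_id r).const_mul m).exp)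
    refine antitoneOn_of_hasDerivWithinAt_nonpos (f' := fun r => f' r * Real.exp (m * r) + f r * (Real.exp (m * r) * (m * 1))) (convex_Ici _)
      (fun r hr => (hd r hr).continuousAt.continuousWithinAt) (fun r hr => ?_) (fun r hr => ?_)
    · rw [interior_Ici] at hr
      exact (hd r hr.le).hasDerivWithinAt
    · rw [interior_Ici] at hr
      have h1 := hA r hr.le
      have h2 := mul_nonpos_of_nonpos_of_nonneg h1 (Real.exp_pos (m * r)).le
      linarith
  obtain ⟨C₁, hC₁⟩ : ∃ C₁, C₁ = f R₁ * Real.exp (m * R₁) := ⟨_, rfl⟩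
  have hfe : ∀ r, R₁ ≤ r → f r * Real.exp (m * r) ≤ C₁ := fun r hr => by
    rw [hC₁]; exact hanti (Set.mem_Ici.2 le_rfl) (Set.mem_Ici.2 hr) hr
  obtain ⟨K, hK⟩ : ∃ K, K = L * (C₁ / m) ^ 2 := ⟨_, rfl⟩
  have hK0 : 0 ≤ K := by rw [hK]; positivity
  have hβK : ∀ r, R₁ ≤ r → -(K / r ^ 2) ≤ β (f r ^ 2) := by
    intro r hr
    have h0 : 0 < r := by linarith
    have h1 : f r < 1 := (hr₀ r (by linarith)).2
    have h2 := hpos r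
    have h3 := hL (f r ^ 2) (by positivity) (by nlinarith)
    have h4 : f r ≤ C₁ / m / r := by
      rw [div_div, le_div_iff₀ (by positivity)]
      refine le_trans ?_ (hfe r hr)
      apply mul_le_mul_of_nonneg_left _ h2.le
      linarith [Real.add_one_le_exp (m * r)]
    have h5 : f r ^ 2 ≤ (C₁ / m) ^ 2 / r ^ 2 := by
      rw [← div_pow]; exact pow_le_pow_left₀ h2.le h4 2
    have h6 : L * f r ^ 2 ≤ K / r ^ 2 := by
      rw [hK, mul_div_assoc]; exact mul_le_mul_of_nonneg_left h5 hL0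
    have := (abs_le.1 h3).1
    linarith
  -- sharp decay
  obtain ⟨A, hAd⟩ : ∃ A, A = (K + k + 1) / s := ⟨_, rfl⟩
  have hA0 : 0 < A := by rw [hAd]; positivity
  have hAs : A * s = K + k + 1 := by rw [hAd]; field_simp
  obtain ⟨R₂, hR₂⟩ : ∃ R₂, R₂ = max (max R₁ A) (2 * (k + A) / s) := ⟨_, rfl⟩
  have hR21 : R₁ ≤ R₂ := by rw [hR₂]; exact (le_max_left _ _).trans (le_max_left _ _)
  have hR2A : A ≤ R₂ := by rw [hR₂]; exact (le_max_right _ _).trans (le_max_left _ _)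
  have hR2k : 2 * (k + A) / s ≤ R₂ := by rw [hR₂]; exact le_max_right _ _
  have hsm : ∀ r, R₂ ≤ r → k / r + A / r ^ 2 ≤ s / 2 := by
    intro r hr
    have h0 : 0 < r := by linarith
    have h1 : 1 ≤ r := by linarith
    have h2 : A / r ^ 2 ≤ A / r := by
      apply div_le_div_of_nonneg_left hA0.le h0; nlinarith
    have h3 : k / r + A / r ≤ s / 2 := by
      rw [← add_div, div_le_iff₀ h0]
      have : 2 * (k + A) / s ≤ r := by linarith
      rw [div_le_iff₀ hs0] at this
      linarith
    linarith
  have hB := gs_riccati k R₂ (s + k) f f' f'' (fun r => s + k / r - A / r ^ 2)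
    (fun r => -k / r ^ 2 + 2 * A / r ^ 3) (fun r => ω + β (f r ^ 2))
    (fun r hr => hf r (by linarith)) (fun r hr => hf' r (by linarith))
    (fun r hr => by
      have h0 : r ≠ 0 := by linarith
      have h1 : HasDerivAt (fun r : ℝ => k / r) (-k / r ^ 2) r := by
        simp only [div_eq_mul_inv]
        exact ((hasDerivAt_inv h0).const_mul k).congr_deriv (by ring)
      have h2 : HasDerivAt (fun r : ℝ => A / r ^ 2) (-(2 * A) / r ^ 3) r := by
        simp only [div_eq_mul_inv]
        refine (((hasDerivAt_pow 2 r).inv (pow_ne_zero 2 h0)).const_mul A).congr_deriv ?_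
        simp
        field_simp
      exact ((h1.const_add s).sub h2).congr_deriv (by ring))
    hpos hlim (by positivity)
    (fun r hr => by
      have h0 : 0 < r := by linarith
      have h1 : k / r ≤ k := div_le_self hk (by linarith)
      have : 0 ≤ A / r ^ 2 := by positivity
      linarith)
    (fun r hr => by
      have := hsm r hr
      have e : 2 * k / r = k / r + k / r := by ring
      rw [e]; linarith)
    (fun r hr => hode r (by linarith))
    (fun r hr => by
      have h0 : 0 < r := by linarith
      have h1 := hβK r (by linarith)
      have hx : A * r⁻¹ ≤ 1 := by
        rw [← div_eq_mul_inv, div_le_one h0]; linarith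
      have hx0 : 0 < r⁻¹ := by positivity
      have e : (ω + -(K / r ^ 2)) - (s + k / r - A / r ^ 2) ^ 2 + (-k / r ^ 2 + 2 * A / r ^ 3)
          + 2 * k * (s + k / r - A / r ^ 2) / r =
          (r⁻¹) ^ 2 * (2 * (A * s) - K - k + k ^ 2 - (A * r⁻¹) ^ 2) + 2 * A * r⁻¹ ^ 3 := by
        rw [← hs2]; simp only [div_eq_mul_inv, ← inv_pow]; ring
      have h2 : (A * r⁻¹) ^ 2 ≤ 1 := pow_le_one₀ (by positivity) hx
      have h3 : 0 ≤ 2 * (A * s) - K - k + k ^ 2 - (A * r⁻¹) ^ 2 := by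
        rw [hAs]; nlinarith [sq_nonneg k]
      have h4 : 0 ≤ (r⁻¹) ^ 2 * (2 * (A * s) - K - k + k ^ 2 - (A * r⁻¹) ^ 2) + 2 * A * r⁻¹ ^ 3 := by
        positivity
      linarith)
  have hanti2 : AntitoneOn (fun r => f r * Real.exp (s * r + A / r + k * Real.log r)) (Set.Ici R₂) := by
    have hd : ∀ r, R₂ ≤ r → HasDerivAt (fun r => f r * Real.exp (s * r + A / r + k * Real.log r))
        (f' r * Real.exp (s * r + A / r + k * Real.log r) +
          f r * (Real.exp (s * r + A / r + k * Real.log r) * (s * 1 + -A / r ^ 2 + k * r⁻¹))) r := by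
      intro r hr
      have h0 : r ≠ 0 := by linarith
      have h1 : HasDerivAt (fun r : ℝ => A / r) (-A / r ^ 2) r := by
        simp only [div_eq_mul_inv]
        exact ((hasDerivAt_inv h0).const_mul A).congr_deriv (by ring)
      exact (hf r (by linarith)).mul
        (((((hasDerivAt_id r).const_mul s).add h1).add ((Real.hasDerivAt_log h0).const_mul k)).exp)
    refine antitoneOn_of_hasDerivWithinAt_nonpos (convex_Ici _)
      (fun r hr => (hd r hr).continuousAt.continuousWithinAt) (fun r hr => ?_) (fun r hr => ?_)
      (f' := fun r => (f' r * Real.exp (s * r + A / r + k * Real.log r) +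
          f r * (Real.exp (s * r + A / r + k * Real.log r) * (s * 1 + -A / r ^ 2 + k * r⁻¹))))
    · rw [interior_Ici] at hr
      exact (hd r hr.le).hasDerivWithinAt
    · rw [interior_Ici] at hr
      have h1 := hB r hr.le
      have h2 := mul_nonpos_of_nonpos_of_nonneg h1 (Real.exp_pos (s * r + A / r + k * Real.log r)).le
      refine le_trans (le_of_eq ?_) h2
      ring
  obtain ⟨C₂, hC₂⟩ : ∃ C₂, C₂ = f R₂ * Real.exp (s * R₂ + A / R₂ + k * Real.log R₂) := ⟨_, rfl⟩
  have hC20 : 0 < C₂ := by rw [hC₂]; exact mul_pos (hpos _) (Real.exp_pos _)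
  have hfr : ∀ r, R₂ ≤ r → f r ≤ C₂ * (r ^ (-k) * Real.exp (-s * r)) := by
    intro r hr
    have h0 : 0 < r := by linarith
    have h1 : f r * Real.exp (s * r + A / r + k * Real.log r) ≤ C₂ := by
      rw [hC₂]; exact hanti2 (Set.mem_Ici.2 le_rfl) (Set.mem_Ici.2 hr) hr
    have h2 : f r * Real.exp (s * r + k * Real.log r) ≤ C₂ := by
      refine le_trans (mul_le_mul_of_nonneg_left (Real.exp_le_exp.2 ?_) (hpos r).le) h1
      have : 0 ≤ A / r := by positivity
      linarith
    have h3 : r ^ (-k) * Real.exp (-s * r) = (Real.exp (s * r + k * Real.log r))⁻¹ := by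
      rw [Real.rpow_def_of_pos h0, ← Real.exp_add, ← Real.exp_neg]; congr 1; ring
    rw [h3, ← div_eq_mul_inv, le_div_iff₀ (Real.exp_pos _)]
    exact h2
  have hpow : ∀ r, 1 ≤ r → r ^ (-k) ≤ (2:ℝ) ^ k * (1 + r) ^ (-k) := by
    intro r hr
    have h0 : 0 < r := by linarith
    have h1 : (2 * r) ^ (-k) ≤ (1 + r) ^ (-k) :=
      Real.rpow_le_rpow_of_nonpos (by linarith) (by linarith) (by linarith)
    rw [Real.mul_rpow (by norm_num) h0.le] at h1
    have h2 : (0:ℝ) < 2 ^ k := by positivity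
    have h3 : (2:ℝ) ^ k * 2 ^ (-k) = 1 := by
      rw [← Real.rpow_add (by norm_num)]; simp
    calc r ^ (-k) = 2 ^ k * (2 ^ (-k) * r ^ (-k)) := by rw [← mul_assoc, h3, one_mul]
      _ ≤ _ := mul_le_mul_of_nonneg_left h1 h2.le
  have hfneg : ∀ r, R₂ ≤ r → f' r ≤ 0 := by
    intro r hr
    have h0 : 0 < r := by linarith
    have h1 := hB r hr
    have h2 := hsm r hr
    have h3 : 0 ≤ k / r := by positivity
    have h4 : 0 ≤ (s + k / r - A / r ^ 2) * f r := mul_nonneg (by linarith) (hpos r).le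
    linarith
  have hf'mono : MonotoneOn f' (Set.Ici R₂) := by
    refine monotoneOn_of_hasDerivWithinAt_nonneg (f' := f'') (convex_Ici _)
      (fun r hr => (hf' r (by linarith [Set.mem_Ici.1 hr])).continuousAt.continuousWithinAt) ?_ ?_
    · intro r hr
      rw [interior_Ici] at hr
      exact (hf' r (by linarith [Set.mem_Ioi.1 hr])).hasDerivWithinAt
    · intro r hr
      rw [interior_Ici] at hr
      have hr' : R₂ < r := hr
      have h0 : 0 < r := by linarith
      rw [hode r h0]
      have h1 := (hr₀ r (by linarith)).1
      have h2 : 0 ≤ (ω + β (f r ^ 2)) * f r := mul_nonneg (by linarith) (hpos r).le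
      have h3 : 2 * k / r * f' r ≤ 0 :=
        mul_nonpos_of_nonneg_of_nonpos (by positivity) (hfneg r hr'.le)
      linarith
  refine ⟨R₂ + 1, C₂ * (2:ℝ) ^ k * ((2:ℝ) ^ k * Real.exp s), by linarith, by positivity, fun r hr => ?_⟩
  have hr1 : 1 ≤ r := by linarith
  have hbase : C₂ * (r ^ (-k) * Real.exp (-s * r)) ≤
      C₂ * (2:ℝ) ^ k * ((1 + r) ^ (-k) * Real.exp (-s * r)) := by
    have := mul_le_mul_of_nonneg_left (mul_le_mul_of_nonneg_right (hpow r hr1) (Real.exp_pos (-s * r)).le) hC20.le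
    refine this.trans (le_of_eq (by ring))
  have hw0 : 0 < (1 + r) ^ (-k) * Real.exp (-s * r) := by positivity
  have hes : 1 ≤ Real.exp s := Real.one_le_exp hs0.le
  have h2k : (1:ℝ) ≤ 2 ^ k := Real.one_le_rpow (by norm_num) hk
  constructor
  · refine (hfr r (by linarith)).trans (hbase.trans ?_)
    rw [mul_assoc (C₂ * (2:ℝ) ^ k)]
    refine mul_le_mul_of_nonneg_left ?_ (by positivity)
    have : 1 ≤ (2:ℝ) ^ k * Real.exp s := one_le_mul_of_one_le_of_one_le h2k hes
    nlinarith
  · rw [abs_of_nonpos (hfneg r (by linarith))]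
    obtain ⟨ξ, hξ, hξe⟩ := exists_hasDerivAt_eq_slope f f' (show r - 1 < r by linarith)
      (fun x hx => (hf x (by linarith [hx.1])).continuousAt.continuousWithinAt)
      (fun x hx => hf x (by linarith [hx.1]))
    have h1 : f' ξ ≤ f' r := hf'mono (Set.mem_Ici.2 (by linarith [hξ.1])) (Set.mem_Ici.2 (by linarith)) hξ.2.le
    have h2 : f' ξ = f r - f (r - 1) := by rw [hξe]; simp
    have h3 := hpos r
    have h4 : -f' r ≤ f (r - 1) := by linarith
    have h5 := hfr (r - 1) (by linarith)
    have h6 := hpow (r - 1) (by linarith)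
    have h7 := hpow r hr1
    rw [show 1 + (r - 1) = r by ring] at h6
    have h8 : (r - 1) ^ (-k) ≤ (2:ℝ) ^ k * (2 ^ k * (1 + r) ^ (-k)) :=
      h6.trans (mul_le_mul_of_nonneg_left h7 (by positivity))
    have h9 : Real.exp (-s * (r - 1)) = Real.exp s * Real.exp (-s * r) := by
      rw [← Real.exp_add]; congr 1; ring
    rw [h9] at h5
    have h10 : C₂ * ((r - 1) ^ (-k) * (Real.exp s * Real.exp (-s * r))) ≤
        C₂ * (((2:ℝ) ^ k * (2 ^ k * (1 + r) ^ (-k))) * (Real.exp s * Real.exp (-s * r))) :=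
      mul_le_mul_of_nonneg_left (mul_le_mul_of_nonneg_right h8 (by positivity)) hC20.le
    refine h4.trans (h5.trans (h10.trans (le_of_eq (by ring))))

/-- Derivatives of `u` up to order `n` are bounded by a multiple of `w` on `(R,∞)`. -/
def GsB (R : ℝ) (w : ℝ → ℝ) (n : ℕ) (u : ℝ → ℝ) : Prop :=
  ContDiffOn ℝ (⊤ : ℕ∞) u (Set.Ioi R) ∧ ∃ C, 0 ≤ C ∧ ∀ i, i ≤ n → ∀ r ∈ Set.Ioi R,
    ‖iteratedFDerivWithin ℝ i u (Set.Ioi R) r‖ ≤ C * w r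

theorem gsB_mono {R : ℝ} {w w' : ℝ → ℝ} {n : ℕ} {u : ℝ → ℝ} (h : GsB R w n u) (K : ℝ) (hK : 0 ≤ K)
    (hw : ∀ r ∈ Set.Ioi R, w r ≤ K * w' r) : GsB R w' n u := by
  obtain ⟨hu, C, hC, h⟩ := h
  refine ⟨hu, C * K, by positivity, fun i hi r hr => (h i hi r hr).trans ?_⟩
  rw [mul_assoc]
  exact mul_le_mul_of_nonneg_left (hw r hr) hC

theorem gsB_mul {R : ℝ} {w : ℝ → ℝ} {n : ℕ} {u v : ℝ → ℝ} (hw : ∀ r ∈ Set.Ioi R, 0 ≤ w r)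
    (hu : GsB R (fun _ => 1) n u) (hv : GsB R w n v) : GsB R w n (fun r => u r * v r) := by
  obtain ⟨hu, C, hC, h⟩ := hu
  obtain ⟨hv, D, hD, h'⟩ := hv
  refine ⟨hu.mul hv, ∑ m ∈ Finset.range (n + 1), ∑ i ∈ Finset.range (m + 1), (m.choose i : ℝ) * C * D, 
    by positivity, fun m hm r hr => ?_⟩
  have h1 := norm_iteratedFDerivWithin_mul_le hu hv (uniqueDiffOn_Ioi R) hr (n := m)
    (by exact_mod_cast le_top)
  have h2 : ∑ i ∈ Finset.range (m + 1), (m.choose i : ℝ) * ‖iteratedFDerivWithin ℝ i u (Set.Ioi R) r‖ *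
        ‖iteratedFDerivWithin ℝ (m - i) v (Set.Ioi R) r‖ ≤
        (∑ i ∈ Finset.range (m + 1), (m.choose i : ℝ) * C * D) * w r := by
    rw [Finset.sum_mul]
    refine Finset.sum_le_sum fun i hi => ?_
    have hi' : i ≤ m := Nat.lt_succ_iff.1 (Finset.mem_range.1 hi)
    have a1 := h i (hi'.trans hm) r hr
    have a2 := h' (m - i) ((Nat.sub_le _ _).trans hm) r hr
    rw [mul_one] at a1
    rw [mul_assoc, mul_assoc, mul_assoc]
    refine mul_le_mul_of_nonneg_left ?_ (by positivity)
    exact mul_le_mul a1 a2 (norm_nonneg _) hC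
  refine h1.trans (h2.trans (mul_le_mul_of_nonneg_right ?_ (hw r hr)))
  exact Finset.single_le_sum (f := fun m => ∑ i ∈ Finset.range (m + 1), (m.choose i : ℝ) * C * D)
    (fun i _ => by positivity) (Finset.mem_range.2 (Nat.lt_succ_iff.2 hm))

theorem gsB_add {R : ℝ} {w : ℝ → ℝ} {n : ℕ} {u v : ℝ → ℝ}
    (hu : GsB R w n u) (hv : GsB R w n v) : GsB R w n (fun r => u r + v r) := by
  obtain ⟨hu, C, hC, h⟩ := hu
  obtain ⟨hv, D, hD, h'⟩ := hv
  refine ⟨hu.add hv, C + D, by positivity, fun m hm r hr => ?_⟩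
  have : iteratedFDerivWithin ℝ m (fun r => u r + v r) (Set.Ioi R) r =
    iteratedFDerivWithin ℝ m u (Set.Ioi R) r + iteratedFDerivWithin ℝ m v (Set.Ioi R) r :=
    fun_iteratedFDerivWithin_add_apply ((hu.of_le (by exact_mod_cast le_top)) r hr)
      ((hv.of_le (by exact_mod_cast le_top)) r hr) (uniqueDiffOn_Ioi R) hr
  rw [this, add_mul]
  exact (norm_add_le _ _).trans (add_le_add (h m hm r hr) (h' m hm r hr))

theorem gsB_const {R : ℝ} (n : ℕ) (c : ℝ) : GsB R (fun _ => 1) n (fun _ => c) := by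
  refine ⟨contDiffOn_const, |c|, abs_nonneg _, fun i hi r hr => ?_⟩
  rcases i with _ | i
  · simp
  · rw [iteratedFDerivWithin_const_of_ne (by simp)]
    simp

theorem gsB_zero {R : ℝ} {w : ℝ → ℝ} {u : ℝ → ℝ} (hu : ContDiffOn ℝ (⊤ : ℕ∞) u (Set.Ioi R))
    (C : ℝ) (hC : 0 ≤ C) (h : ∀ r ∈ Set.Ioi R, |u r| ≤ C * w r) : GsB R w 0 u := by
  refine ⟨hu, C, hC, fun i hi r hr => ?_⟩
  obtain rfl : i = 0 := by omega
  simpa using h r hr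

theorem gsB_succ {R : ℝ} {w : ℝ → ℝ} {n : ℕ} {u v : ℝ → ℝ} (hw : ∀ r ∈ Set.Ioi R, 0 ≤ w r)
    (hu : GsB R w 0 u) (hd : ∀ r ∈ Set.Ioi R, HasDerivAt u (v r) r)
    (hv : GsB R w n v) : GsB R w (n + 1) u := by
  obtain ⟨hu, C, hC, h⟩ := hu
  obtain ⟨hv, D, hD, h'⟩ := hv
  refine ⟨hu, C + D, by positivity, fun i hi r hr => ?_⟩
  have hwr := hw r hr
  rcases i with _ | i
  · have := h 0 le_rfl r hr
    nlinarith
  · have h1 : iteratedDerivWithin (i + 1) u (Set.Ioi R) r = iteratedDerivWithin i v (Set.Ioi R) r := by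
      rw [iteratedDerivWithin_succ']
      refine iteratedDerivWithin_congr (fun y hy => ?_) hr
      exact (hd y hy).hasDerivWithinAt.derivWithin (uniqueDiffOn_Ioi R y hy)
    rw [norm_iteratedFDerivWithin_eq_norm_iteratedDerivWithin, h1,
      ← norm_iteratedFDerivWithin_eq_norm_iteratedDerivWithin]
    have := h' i (by omega) r hr
    nlinarith

theorem gsB_inv {R : ℝ} (hR : 1 ≤ R) (n : ℕ) : GsB R (fun _ => 1) n (fun r => r⁻¹) := by
  have hs : ContDiffOn ℝ (⊤ : ℕ∞) (fun r : ℝ => r⁻¹) (Set.Ioi R) :=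
    contDiffOn_id.inv (fun r hr => by have : R < r := hr; simp; linarith)
  have h0 : GsB R (fun _ => 1) 0 (fun r => r⁻¹) := by
    refine gsB_zero hs 1 zero_le_one (fun r hr => ?_)
    have h1 : R < r := hr
    rw [abs_of_nonneg (by have : 0 < r := by linarith
                          positivity)]
    rw [mul_one]; exact inv_le_one_of_one_le₀ (by linarith)
  induction n with
  | zero => exact h0
  | succ n ih =>
    refine gsB_succ (fun _ _ => zero_le_one) h0 (v := fun r => (-1) * (r⁻¹ * r⁻¹)) ?_
      (gsB_mul (fun _ _ => zero_le_one) (gsB_const _ _) (gsB_mul (fun _ _ => zero_le_one) ih ih))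
    intro r hr
    have h1 : R < r := hr
    exact (hasDerivAt_inv (by linarith)).congr_deriv (by ring)

theorem gsB_comp {R : ℝ} {n : ℕ} {u : ℝ → ℝ} (G : ℝ → ℝ) (hG : ContDiff ℝ (⊤ : ℕ∞) G)
    (hu : GsB R (fun _ => 1) n u) : GsB R (fun _ => 1) n (fun r => G (u r)) := by
  obtain ⟨hu, C, hC, h⟩ := hu
  have hb : ∀ i : ℕ, ∃ M, ∀ y ∈ Set.Icc (-C) C, ‖iteratedFDeriv ℝ i G y‖ ≤ M := fun i =>
    isCompact_Icc.exists_bound_of_continuousOn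
      (hG.continuous_iteratedFDeriv (by exact_mod_cast le_top)).continuousOn
  choose M hM using hb
  obtain ⟨M', hM'⟩ : ∃ M', M' = ∑ i ∈ Finset.range (n + 1), |M i| := ⟨_, rfl⟩
  have hM0 : 0 ≤ M' := by rw [hM']; positivity
  refine ⟨hG.comp_contDiffOn hu, ∑ m ∈ Finset.range (n + 1), m.factorial * M' * (1 + C) ^ m, by positivity, fun m hm r hr => ?_⟩
  have h1 := norm_iteratedFDerivWithin_comp_le (g := G) (f := u) (n := m) (t := Set.univ) hG.contDiffOn hu
    (by exact_mod_cast le_top)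
    uniqueDiffOn_univ (uniqueDiffOn_Ioi R) (Set.mapsTo_univ _ _) hr (C := M') (D := 1 + C) ?_ ?_
  · rw [mul_one]
    refine le_trans h1 ?_
    exact Finset.single_le_sum (f := fun m => (m.factorial : ℝ) * M' * (1 + C) ^ m)
      (fun i _ => by positivity) (Finset.mem_range.2 (Nat.lt_succ_iff.2 hm))
  · intro i hi
    rw [iteratedFDerivWithin_univ]
    have h0 := h 0 (Nat.zero_le _) r hr
    rw [norm_iteratedFDerivWithin_zero, mul_one, Real.norm_eq_abs] at h0
    refine (hM i (u r) (abs_le.1 h0)).trans ((le_abs_self _).trans ?_)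
    rw [hM']
    exact Finset.single_le_sum (f := fun m => |M m|)
      (fun i _ => by positivity) (Finset.mem_range.2 (Nat.lt_succ_iff.2 (hi.trans hm)))
  · intro i h1i hi
    have := h i (hi.trans hm) r hr
    rw [mul_one] at this
    refine this.trans ((by linarith : C ≤ 1 + C).trans ?_)
    exact le_self_pow₀ (by linarith) (by omega)

theorem gsB_ode (k ω R : ℝ) (hR : 1 ≤ R) (β : ℝ → ℝ) (hβ : ContDiff ℝ (⊤ : ℕ∞) β) (w : ℝ → ℝ)
    (hw0 : ∀ r ∈ Set.Ioi R, 0 ≤ w r) (hw1 : ∀ r ∈ Set.Ioi R, w r ≤ 1)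
    (f f' f'' : ℝ → ℝ) (hfs : ContDiffOn ℝ (⊤ : ℕ∞) f (Set.Ioi R))
    (hfs' : ContDiffOn ℝ (⊤ : ℕ∞) f' (Set.Ioi R))
    (hf : ∀ r, 0 < r → HasDerivAt f (f' r) r) (hf' : ∀ r, 0 < r → HasDerivAt f' (f'' r) r)
    (hode : ∀ r, 0 < r → f'' r = (ω + β (f r ^ 2)) * f r - 2 * k / r * f' r)
    (C : ℝ) (hC : 0 ≤ C) (hfw : ∀ r ∈ Set.Ioi R, |f r| ≤ C * w r)
    (hfw' : ∀ r ∈ Set.Ioi R, |f' r| ≤ C * w r) (n : ℕ) : GsB R w n f ∧ GsB R w n f' := by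
  have b0 := gsB_zero hfs C hC hfw
  have b0' := gsB_zero hfs' C hC hfw'
  induction n with
  | zero => exact ⟨b0, b0'⟩
  | succ n ih =>
    obtain ⟨i1, i2⟩ := ih
    refine ⟨gsB_succ hw0 b0 (fun r hr => hf r (by have : R < r := hr; linarith)) i2, ?_⟩
    have c1 : GsB R (fun _ => 1) n f := gsB_mono i1 1 zero_le_one (by simpa using hw1)
    have c2 : GsB R (fun _ => 1) n (fun r => ω + β (f r ^ 2)) :=
      gsB_comp (fun y => ω + β (y ^ 2)) (contDiff_const.add (hβ.comp (contDiff_id.pow 2))) c1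
    have c3 := gsB_mul hw0 c2 i1
    have c4 : GsB R (fun _ => 1) n (fun r => (-(2 * k)) * r⁻¹) :=
      gsB_mul (fun _ _ => zero_le_one) (gsB_const n _) (gsB_inv hR n)
    have c5 := gsB_add c3 (gsB_mul hw0 c4 i2)
    refine gsB_succ hw0 b0' (fun r hr => ?_) c5
    have h0 : 0 < r := by have : R < r := hr; linarith
    exact (hf' r h0).congr_deriv (by rw [hode r h0]; ring)

theorem gs_norm_bound {E : Type} [NormedAddCommGroup E] [InnerProductSpace ℝ E] [FiniteDimensional ℝ E]
    (i : ℕ) (hi : 1 ≤ i) : ∃ M, ∀ x : E, 1 ≤ ‖x‖ →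
      ‖iteratedFDeriv ℝ i (fun y : E => ‖y‖) x‖ ≤ M := by
  have hs : ∀ x : E, x ≠ 0 → ContDiffAt ℝ i (fun y : E => ‖y‖) x := fun x hx => contDiffAt_norm ℝ hx
  have hc : ContinuousOn (iteratedFDeriv ℝ i (fun y : E => ‖y‖)) (Metric.sphere 0 1) := by
    intro x hx
    have hx0 : x ≠ 0 := by rintro rfl; simp at hx
    exact ((hs x hx0).continuousAt_iteratedFDeriv le_rfl).continuousWithinAt
  obtain ⟨M, hM⟩ := (isCompact_sphere (0:E) 1).exists_bound_of_continuousOn hc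
  refine ⟨M, fun x hx => ?_⟩
  have hn0 : ‖x‖ ≠ 0 := by linarith
  have hx0 : x ≠ 0 := norm_ne_zero_iff.1 hn0
  let g : E ≃L[ℝ] E := ContinuousLinearEquiv.smulLeft (Units.mk0 ‖x‖⁻¹ (inv_ne_zero hn0))
  have hg : ∀ y, g y = ‖x‖⁻¹ • y := fun y => rfl
  have hgx : ‖g x‖ = 1 := by rw [hg, norm_smul, norm_inv, norm_norm, inv_mul_cancel₀ hn0]
  have hgx0 : g x ≠ 0 := by rw [← norm_ne_zero_iff, hgx]; norm_num
  have e1 : (fun y : E => ‖y‖) = fun y => ‖x‖ • (((fun y : E => ‖y‖) ∘ g) y) := by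
    funext y
    simp only [Function.comp, hg, norm_smul, norm_inv, norm_norm, smul_eq_mul]
    field_simp
  have e2 : iteratedFDeriv ℝ i ((fun y : E => ‖y‖) ∘ g) x =
      (iteratedFDeriv ℝ i (fun y : E => ‖y‖) (g x)).compContinuousLinearMap fun _ => (g : E →L[ℝ] E) := by
    have := g.iteratedFDerivWithin_comp_right (fun y : E => ‖y‖) uniqueDiffOn_univ (x := x) (Set.mem_univ _) i
    simpa [iteratedFDerivWithin_univ] using this
  have e3 : ‖(g : E →L[ℝ] E)‖ ≤ ‖x‖⁻¹ := by
    refine ContinuousLinearMap.opNorm_le_bound _ (by positivity) fun y => ?_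
    show ‖g y‖ ≤ _
    rw [hg, norm_smul, norm_inv, norm_norm]
  have e4 : ‖iteratedFDeriv ℝ i ((fun y : E => ‖y‖) ∘ g) x‖ ≤ M * ‖x‖⁻¹ ^ i := by
    rw [e2]
    refine (ContinuousMultilinearMap.norm_compContinuousLinearMap_le _ _).trans ?_
    have := hM (g x) (by simp [hgx])
    rw [Finset.prod_const, Finset.card_univ, Fintype.card_fin]
    exact mul_le_mul this (pow_le_pow_left₀ (norm_nonneg _) e3 i) (by positivity) ((norm_nonneg _).trans this)
  have hM0 : 0 ≤ M := (norm_nonneg _).trans (hM (g x) (by simp [hgx]))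
  have hcd : ContDiffAt ℝ i ((fun y : E => ‖y‖) ∘ g) x := (hs (g x) hgx0).comp x g.contDiff.contDiffAt
  rw [e1, iteratedFDeriv_const_smul_apply' hcd, norm_smul, norm_norm]
  have hxi : ‖x‖ * ‖x‖⁻¹ ^ i ≤ 1 := by
    obtain ⟨j, rfl⟩ : ∃ j, i = j + 1 := ⟨i - 1, by omega⟩
    rw [pow_succ, mul_comm, mul_assoc, inv_mul_cancel₀ hn0, mul_one]
    exact pow_le_one₀ (by positivity) (inv_le_one_of_one_le₀ hx)
  calc _ ≤ ‖x‖ * (M * ‖x‖⁻¹ ^ i) := mul_le_mul_of_nonneg_left e4 (norm_nonneg _)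
    _ = M * (‖x‖ * ‖x‖⁻¹ ^ i) := by ring
    _ ≤ M * 1 := mul_le_mul_of_nonneg_left hxi hM0
    _ = M := mul_one M

theorem gs_norm_deriv {d : ℕ} (x : EuclideanSpace ℝ (Fin d)) (hx : x ≠ 0) :
    HasFDerivAt (fun y : EuclideanSpace ℝ (Fin d) => ‖y‖) (‖x‖⁻¹ • innerSL ℝ x) x := by
  have h1 := (hasStrictFDerivAt_norm_sq x).hasFDerivAt
  have hn : ‖x‖ ^ 2 ≠ 0 := by simpa using hx
  have h2 := h1.sqrt hn
  have e : (fun y : EuclideanSpace ℝ (Fin d) => √(‖y‖ ^ 2)) = fun y => ‖y‖ := by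
    funext y; exact Real.sqrt_sq (norm_nonneg y)
  rw [e] at h2
  refine h2.congr_fderiv ?_
  ext v
  simp only [Real.sqrt_sq (norm_nonneg x), smul_apply, innerSL_apply_apply, smul_eq_mul, nsmul_eq_mul]
  have : ‖x‖ ≠ 0 := norm_ne_zero_iff.2 hx
  push_cast
  field_simp

/-- derivative of a radial function -/
theorem gs_rad_deriv {d : ℕ} (φ : EuclideanSpace ℝ (Fin d) → ℝ) (f f' : ℝ → ℝ)
    (hφf : ∀ x, φ x = f ‖x‖) (hf : ∀ r, HasDerivAt f (f' r) r)
    (x : EuclideanSpace ℝ (Fin d)) (hx : x ≠ 0) :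
    HasFDerivAt φ ((f' ‖x‖ / ‖x‖) • innerSL ℝ x) x := by
  have h := (hf ‖x‖).comp_hasFDerivAt x (gs_norm_deriv x hx)
  have e : φ = f ∘ (fun y => ‖y‖) := by funext y; exact hφf y
  rw [e]
  refine h.congr_fderiv ?_
  rw [smul_smul, div_eq_mul_inv]

theorem gs_ode {d : ℕ} (φ : EuclideanSpace ℝ (Fin d) → ℝ) (f f' f'' : ℝ → ℝ)
    (hφf : ∀ x, φ x = f ‖x‖) (hf : ∀ r, HasDerivAt f (f' r) r)
    (hf' : ∀ r, HasDerivAt f' (f'' r) r)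
    (x : EuclideanSpace ℝ (Fin d)) (hx : x ≠ 0) :
    lap φ x = f'' ‖x‖ + ((d : ℝ) - 1) / ‖x‖ * f' ‖x‖ := by
  have hn : ‖x‖ ≠ 0 := norm_ne_zero_iff.2 hx
  have hcoord : ∀ (y : EuclideanSpace ℝ (Fin d)) i, inner ℝ y (EuclideanSpace.single i (1:ℝ)) = y i := by
    intro y i
    simp [EuclideanSpace.inner_single_right]
  have hterm : ∀ i : Fin d, fderiv ℝ (fun y => fderiv ℝ φ y (EuclideanSpace.single i 1)) x
      (EuclideanSpace.single i 1) =
      (f'' ‖x‖ * ‖x‖ - f' ‖x‖) / ‖x‖ ^ 3 * (x i) ^ 2 + f' ‖x‖ / ‖x‖ := by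
    intro i
    have hev : (fun y => fderiv ℝ φ y (EuclideanSpace.single i 1)) =ᶠ[𝓝 x]
        fun y => (f' ‖y‖ / ‖y‖) * (EuclideanSpace.proj i : EuclideanSpace ℝ (Fin d) →L[ℝ] ℝ) y := by
      filter_upwards [isOpen_ne.mem_nhds hx] with y hy
      rw [(gs_rad_deriv φ f f' hφf hf y hy).fderiv]
      simp only [smul_apply, innerSL_apply_apply, smul_eq_mul, hcoord]
      rfl
    rw [hev.fderiv_eq]
    have hg : HasDerivAt (fun r => f' r / r) ((f'' ‖x‖ * ‖x‖ - f' ‖x‖ * 1) / ‖x‖ ^ 2) ‖x‖ :=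
      (hf' ‖x‖).div (hasDerivAt_id _) hn
    have h1 := hg.comp_hasFDerivAt x (gs_norm_deriv x hx)
    have h2 := h1.mul (EuclideanSpace.proj i : EuclideanSpace ℝ (Fin d) →L[ℝ] ℝ).hasFDerivAt
    have h3 := h2.fderiv
    have h4 : (fun y => (f' ‖y‖ / ‖y‖) * (EuclideanSpace.proj i : EuclideanSpace ℝ (Fin d) →L[ℝ] ℝ) y) =
      ((fun r => f' r / r) ∘ fun y => ‖y‖) * ⇑(EuclideanSpace.proj i : EuclideanSpace ℝ (Fin d) →L[ℝ] ℝ) := rfl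
    rw [h4, h3]
    simp only [add_apply, smul_apply, innerSL_apply_apply, smul_eq_mul, hcoord,
      Function.comp]
    have hp1 : (EuclideanSpace.proj i : EuclideanSpace ℝ (Fin d) →L[ℝ] ℝ) (EuclideanSpace.single i (1:ℝ)) = 1 := by simp
    have hp2 : (EuclideanSpace.proj i : EuclideanSpace ℝ (Fin d) →L[ℝ] ℝ) x = x i := rfl
    rw [hp1, hp2]
    field_simp
    ring
  unfold lap
  rw [Finset.sum_congr rfl (fun i _ => hterm i), Finset.sum_add_distrib, ← Finset.mul_sum]
  have hsq : ∑ i, (x i) ^ 2 = ‖x‖ ^ 2 := (EuclideanSpace.real_norm_sq_eq x).symm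
  rw [hsq]
  simp only [Finset.sum_const, Finset.card_univ, Fintype.card_fin, nsmul_eq_mul]
  field_simp
  ring

/-- integrated form of the equation -/
theorem gs_grad {d : ℕ} (hd : 1 ≤ d) (φ : EuclideanSpace ℝ (Fin d) → ℝ) (f f' f'' F : ℝ → ℝ)
    (hF : Continuous F)
    (hφf : ∀ x, φ x = f ‖x‖) (hf : ∀ r, HasDerivAt f (f' r) r)
    (hf' : ∀ r, HasDerivAt f' (f'' r) r) (hf0 : f' 0 = 0)
    (hode : ∀ r, 0 < r → f'' r + ((d : ℝ) - 1) / r * f' r = F (f r))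
    (hφd : Differentiable ℝ φ)
    (x : EuclideanSpace ℝ (Fin d)) :
    HasFDerivAt φ ((∫ t in (0:ℝ)..1, t ^ (d - 1) * F (φ (t • x))) • innerSL ℝ x) x := by
  by_cases hx : x = 0
  · subst hx
    have h := (hφd 0).hasFDerivAt
    have heven : ∀ y, φ (-y) = φ y := fun y => by rw [hφf, hφf, norm_neg]
    have h2 : HasFDerivAt (fun y => φ (-y)) (-(fderiv ℝ φ 0)) 0 := by
      have h' : HasFDerivAt φ (fderiv ℝ φ 0) (-0) := by rw [neg_zero]; exact h
      have := h'.comp (0 : EuclideanSpace ℝ (Fin d)) (hasFDerivAt_id (0 : EuclideanSpace ℝ (Fin d))).neg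
      refine this.congr_fderiv ?_
      ext v; simp
    have h3 : (fun y => φ (-y)) = φ := funext heven
    rw [h3] at h2
    have h4 := h.unique h2
    have h5 : fderiv ℝ φ 0 = 0 := by
      ext v
      have := congrArg (fun L : EuclideanSpace ℝ (Fin d) →L[ℝ] ℝ => L v) h4
      simp only [neg_apply] at this
      simp only [zero_apply]
      linarith
    rw [h5] at h
    refine h.congr_fderiv ?_
    simp
  · have hn : 0 < ‖x‖ := norm_pos_iff.2 hx
    refine (gs_rad_deriv φ f f' hφf hf x hx).congr_fderiv ?_
    congr 1
    have hfc : Continuous f := continuous_iff_continuousAt.2 fun r => (hf r).continuousAt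
    have hfc' : Continuous f' := continuous_iff_continuousAt.2 fun r => (hf' r).continuousAt
    have hint : ∫ t in (0:ℝ)..1, ‖x‖ * (t ^ (d - 1) * F (f (t * ‖x‖))) =
        (1:ℝ) ^ (d - 1) * f' (1 * ‖x‖) - (0:ℝ) ^ (d - 1) * f' (0 * ‖x‖) := by
      refine intervalIntegral.integral_eq_sub_of_hasDerivAt_of_le (f := fun t => t ^ (d - 1) * f' (t * ‖x‖)) zero_le_one ?_ ?_ ?_
      · fun_prop
      · intro t ht
        have h1 : HasDerivAt (fun t => f' (t * ‖x‖)) (f'' (t * ‖x‖) * (1 * ‖x‖)) t :=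
          (hf' (t * ‖x‖)).comp t ((hasDerivAt_id t).mul_const ‖x‖)
        refine ((hasDerivAt_pow (d - 1) t).mul h1).congr_deriv ?_
        have ht0 : 0 < t := ht.1
        rw [← hode (t * ‖x‖) (by positivity)]
        obtain ⟨m, rfl⟩ : ∃ m, d = m + 1 := ⟨d - 1, by omega⟩
        simp only [Nat.add_sub_cancel]
        push_cast
        rcases m with _ | m
        · simp; ring
        · simp only [Nat.add_sub_cancel]
          push_cast
          field_simp
          ring
      · apply Continuous.intervalIntegrable
        fun_prop
    rw [intervalIntegral.integral_const_mul] at hint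
    have e : ∀ t ∈ Set.uIcc (0:ℝ) 1, t ^ (d - 1) * F (φ (t • x)) = t ^ (d - 1) * F (f (t * ‖x‖)) := by
      intro t ht
      rw [Set.uIcc_of_le zero_le_one] at ht
      rw [hφf, norm_smul, Real.norm_of_nonneg ht.1]
    rw [intervalIntegral.integral_congr e]
    rw [zero_mul, hf0, mul_zero, sub_zero, one_pow, one_mul, one_mul] at hint
    rw [div_eq_iff hn.ne', ← hint]
    ring

theorem gs_smooth {d : ℕ} (φ : EuclideanSpace ℝ (Fin d) → ℝ) (F : ℝ → ℝ)
    (hF : ContDiff ℝ (⊤ : ℕ∞) F) (hc : Continuous φ)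
    (h : ∀ x, HasFDerivAt φ ((∫ t in (0:ℝ)..1, t ^ (d - 1) * F (φ (t • x))) • innerSL ℝ x) x) :
    ContDiff ℝ (⊤ : ℕ∞) φ := by
  rw [contDiff_infty]
  intro n
  induction n with
  | zero => simpa using hc
  | succ n ih =>
    push_cast
    rw [contDiff_succ_iff_hasFDerivAt]
    refine ⟨_, ?_, h⟩
    have hI : ContDiff ℝ n (fun x : EuclideanSpace ℝ (Fin d) => innerSL ℝ x) :=
      (innerSL ℝ (E := EuclideanSpace ℝ (Fin d))).contDiff
    have hF' : ContDiff ℝ n F := hF.of_le (by exact_mod_cast le_top)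
    have hJ := gs_param n
      (fun p : EuclideanSpace ℝ (Fin d) × ℝ => p.2 ^ (d - 1) * F (φ (p.2 • p.1)))
      ((contDiff_snd.pow _).mul (hF'.comp (ih.comp (contDiff_snd.smul contDiff_fst))))
    exact hJ.smul hI

/-- Exponential decay of ground states: a positive radial `C²` solution of
`Δφ = ωφ + β(φ²)φ` vanishing at infinity satisfies
`|∂^α φ(x)| ≤ C_α (1+|x|)^{-(d-1)/2} e^{-√ω |x|}` for every multi-index `α`. -/
theorem ground_state_exponential_decay
    {d : ℕ} (hd : 1 ≤ d) (ω : ℝ) (hω : 0 < ω)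
    (β : ℝ → ℝ) (hβ : ContDiff ℝ (⊤ : ℕ∞) β) (hβ0 : β 0 = 0)
    (φ : EuclideanSpace ℝ (Fin d) → ℝ) (hφC2 : ContDiff ℝ 2 φ)
    (hφpos : ∀ x, 0 < φ x)
    (hφrad : ∀ x y, ‖x‖ = ‖y‖ → φ x = φ y)
    (heq : ∀ x, lap φ x = ω * φ x + β ((φ x) ^ 2) * φ x)
    (hdecay : Filter.Tendsto φ (Filter.cocompact (EuclideanSpace ℝ (Fin d))) (𝓝 0)) :
    ∀ n : ℕ, ∃ C : ℝ, 0 < C ∧ ∀ x,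
      ‖iteratedFDeriv ℝ n φ x‖ ≤
        C * (1 + ‖x‖) ^ (-(((d : ℝ) - 1) / 2)) * Real.exp (-(Real.sqrt ω) * ‖x‖) := by
  intro n
  obtain ⟨e, he⟩ : ∃ e : EuclideanSpace ℝ (Fin d), ‖e‖ = 1 :=
    ⟨EuclideanSpace.single ⟨0, hd⟩ 1, by simp⟩
  have hle : ContDiff ℝ (⊤ : ℕ∞) (fun t : ℝ => t • e) := contDiff_id.smul contDiff_const
  obtain ⟨f, hfdef⟩ : ∃ f : ℝ → ℝ, f = fun t => φ (t • e) := ⟨_, rfl⟩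
  have hfC2 : ContDiff ℝ 2 f := by
    rw [hfdef]; exact hφC2.comp (contDiff_id.smul contDiff_const)
  have hφf : ∀ x, φ x = f ‖x‖ := by
    intro x
    rw [hfdef]
    exact hφrad _ _ (by rw [norm_smul, he, norm_norm, mul_one])
  have hf : ∀ r, HasDerivAt f (deriv f r) r := fun r =>
    (hfC2.differentiable (by norm_num) r).hasDerivAt
  have hfC1 : ContDiff ℝ 1 (deriv f) := (contDiff_succ_iff_deriv (n := 1)).1 (by exact_mod_cast hfC2) |>.2.2
  have hf' : ∀ r, HasDerivAt (deriv f) (deriv (deriv f) r) r := fun r =>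
    (hfC1.differentiable (by norm_num) r).hasDerivAt
  have hfeven : ∀ t, f (-t) = f t := by
    intro t; rw [hfdef]; exact hφrad _ _ (by simp [norm_smul])
  have hf0 : deriv f 0 = 0 := by
    have h1 : deriv (fun t => f (-t)) 0 = -deriv f (-0) := deriv_comp_neg f 0
    rw [funext hfeven, neg_zero] at h1
    linarith
  have hode0 : ∀ r, 0 < r → deriv (deriv f) r + ((d : ℝ) - 1) / r * deriv f r =
      (fun u => ω * u + β (u ^ 2) * u) (f r) := by
    intro r hr
    have hre : ‖r • e‖ = r := by rw [norm_smul, he, mul_one, Real.norm_of_nonneg hr.le]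
    have hne : r • e ≠ 0 := by rw [← norm_ne_zero_iff, hre]; exact hr.ne'
    have h1 := gs_ode φ f (deriv f) (deriv (deriv f)) hφf hf hf' (r • e) hne
    rw [heq, hφf, hre] at h1
    exact h1.symm
  have hFs : ContDiff ℝ (⊤ : ℕ∞) (fun u : ℝ => ω * u + β (u ^ 2) * u) :=
    (contDiff_const.mul contDiff_id).add ((hβ.comp (contDiff_id.pow 2)).mul contDiff_id)
  have hφs : ContDiff ℝ (⊤ : ℕ∞) φ := gs_smooth φ _ hFs hφC2.continuous
    (gs_grad hd φ f (deriv f) (deriv (deriv f)) _ hFs.continuous hφf hf hf' hf0 hode0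
      (hφC2.differentiable (by norm_num)))
  have hfs : ContDiff ℝ (⊤ : ℕ∞) f := by rw [hfdef]; exact hφs.comp hle
  have hfs' : ContDiff ℝ (⊤ : ℕ∞) (deriv f) := (contDiff_infty_iff_deriv.1 hfs).2
  obtain ⟨k, hk⟩ : ∃ k : ℝ, k = ((d : ℝ) - 1) / 2 := ⟨_, rfl⟩
  have hd1 : (1:ℝ) ≤ d := by exact_mod_cast hd
  have hk0 : 0 ≤ k := by rw [hk]; linarith
  rw [← hk]
  have hode : ∀ r, 0 < r →
      deriv (deriv f) r = (ω + β (f r ^ 2)) * f r - 2 * k / r * deriv f r := by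
    intro r hr
    have h1 := hode0 r hr
    have h2 : 2 * k = (d : ℝ) - 1 := by rw [hk]; ring
    rw [h2]
    simp only at h1
    linarith
  have hfpos : ∀ r, 0 < f r := fun r => by rw [hfdef]; exact hφpos _
  have hlim : Filter.Tendsto f Filter.atTop (𝓝 0) := by
    rw [hfdef]
    refine hdecay.comp ?_
    rw [← Metric.cobounded_eq_cocompact, ← tendsto_norm_atTop_iff_cobounded]
    simp only [norm_smul, he, mul_one]
    exact tendsto_norm_atTop_atTop
  obtain ⟨R, C, hR, hC, hb⟩ := gs_decay1 k ω hk0 hω β hβ hβ0 f (deriv f) (deriv (deriv f))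
    (fun r _ => hf r) (fun r _ => hf' r) hfpos hlim hode
  obtain ⟨w, hwdef⟩ : ∃ w : ℝ → ℝ, w = fun r => (1 + r) ^ (-k) * Real.exp (-(Real.sqrt ω) * r) :=
    ⟨_, rfl⟩
  have hwpos : ∀ r, 0 ≤ r → 0 < w r := fun r hr => by rw [hwdef]; positivity
  have hw1 : ∀ r, 0 ≤ r → w r ≤ 1 := fun r hr => by
    rw [hwdef]
    refine mul_le_one₀ (Real.rpow_le_one_of_one_le_of_nonpos (by linarith) (by linarith))
      (Real.exp_pos _).le (Real.exp_le_one_iff.2 ?_)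
    have := mul_nonneg (Real.sqrt_nonneg ω) hr
    linarith
  have hIoi : ∀ r ∈ Set.Ioi R, 0 ≤ r := fun r hr => by
    have : R < r := hr
    linarith
  obtain ⟨⟨-, D, hD, hfD⟩, -⟩ := gsB_ode k ω R hR β hβ w (fun r hr => (hwpos r (hIoi r hr)).le)
    (fun r hr => hw1 r (hIoi r hr)) f (deriv f) (deriv (deriv f)) hfs.contDiffOn hfs'.contDiffOn
    (fun r _ => hf r) (fun r _ => hf' r) hode C hC.le
    (fun r hr => by
      rw [abs_of_pos (hfpos r), hwdef]; exact (hb r (le_of_lt hr)).1)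
    (fun r hr => by
      rw [hwdef]; exact (hb r (le_of_lt hr)).2) n
  -- bound on the norm
  have hnb : ∀ i : ℕ, ∃ M, 1 ≤ i → ∀ x : EuclideanSpace ℝ (Fin d), 1 ≤ ‖x‖ →
      ‖iteratedFDeriv ℝ i (fun y : EuclideanSpace ℝ (Fin d) => ‖y‖) x‖ ≤ M := by
    intro i
    by_cases hi : 1 ≤ i
    · obtain ⟨M, hM⟩ := gs_norm_bound (E := EuclideanSpace ℝ (Fin d)) i hi
      exact ⟨M, fun _ => hM⟩
    · exact ⟨0, fun h => absurd h hi⟩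
  choose M hM using hnb
  obtain ⟨Q, hQ⟩ : ∃ Q, Q = 1 + ∑ i ∈ Finset.range (n + 1), |M i| := ⟨_, rfl⟩
  have hQ1 : 1 ≤ Q := by
    rw [hQ]
    have : 0 ≤ ∑ i ∈ Finset.range (n + 1), |M i| := by positivity
    linarith
  have hopen : IsOpen {x : EuclideanSpace ℝ (Fin d) | R < ‖x‖} :=
    isOpen_lt continuous_const continuous_norm
  have hout : ∀ x, R < ‖x‖ → ‖iteratedFDeriv ℝ n φ x‖ ≤ n.factorial * D * Q ^ n * w ‖x‖ := by
    intro x hx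
    have hx' : x ∈ {x : EuclideanSpace ℝ (Fin d) | R < ‖x‖} := hx
    have hcd : ContDiffOn ℝ (⊤ : ℕ∞) (fun y : EuclideanSpace ℝ (Fin d) => ‖y‖)
        {x : EuclideanSpace ℝ (Fin d) | R < ‖x‖} := fun y hy => by
      have hy' : R < ‖y‖ := hy
      have : y ≠ 0 := norm_ne_zero_iff.1 (by linarith)
      exact (contDiffAt_norm ℝ this).contDiffWithinAt
    have h1 := norm_iteratedFDerivWithin_comp_le (g := f)
      (f := fun y : EuclideanSpace ℝ (Fin d) => ‖y‖) (n := n) (t := Set.Ioi R)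
      hfs.contDiffOn hcd (by exact_mod_cast le_top) (uniqueDiffOn_Ioi R) hopen.uniqueDiffOn
      (fun y hy => hy) hx' (C := D * w ‖x‖) (D := Q) (fun i hi => hfD i hi _ hx) (fun i h1i hi => by
        rw [iteratedFDerivWithin_of_isOpen i hopen hx']
        refine (hM i h1i x (by linarith)).trans ((le_abs_self _).trans ?_)
        have h2 : |M i| ≤ Q := by
          rw [hQ]
          have := Finset.single_le_sum (f := fun i => |M i|) (fun i _ => abs_nonneg _)
            (Finset.mem_range.2 (Nat.lt_succ_iff.2 hi))
          linarith
        exact h2.trans (le_self_pow₀ hQ1 (by omega)))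
    rw [iteratedFDerivWithin_of_isOpen n hopen hx'] at h1
    have e1 : (f ∘ fun y : EuclideanSpace ℝ (Fin d) => ‖y‖) = φ := by
      funext y; exact (hφf y).symm
    rw [e1] at h1
    refine h1.trans (le_of_eq (by ring))
  -- compact part
  have hwc : ContinuousOn (fun x : EuclideanSpace ℝ (Fin d) => ‖iteratedFDeriv ℝ n φ x‖ / w ‖x‖)
      (Metric.closedBall 0 R) := by
    refine ContinuousOn.div
      (hφs.continuous_iteratedFDeriv (by exact_mod_cast le_top)).norm.continuousOn ?_ ?_
    · rw [hwdef]
      refine ContinuousOn.mul (ContinuousOn.rpow_const (by fun_prop) ?_) (by fun_prop)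
      intro x _
      left
      have := norm_nonneg x
      linarith
    · intro x _
      exact (hwpos _ (norm_nonneg x)).ne'
  obtain ⟨B, hB⟩ := (isCompact_closedBall (0 : EuclideanSpace ℝ (Fin d)) R).exists_bound_of_continuousOn hwc
  refine ⟨n.factorial * D * Q ^ n + |B| + 1, by positivity, fun x => ?_⟩
  have hwx := hwpos _ (norm_nonneg x)
  have hfin : ‖iteratedFDeriv ℝ n φ x‖ ≤ (n.factorial * D * Q ^ n + |B| + 1) * w ‖x‖ := by
    have hN : 0 ≤ n.factorial * D * Q ^ n := by positivity
    have hBn := abs_nonneg B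
    by_cases hx : R < ‖x‖
    · refine (hout x hx).trans (mul_le_mul_of_nonneg_right (by linarith) hwx.le)
    · have h1 := hB x (by simpa using hx)
      rw [Real.norm_of_nonneg (by positivity), div_le_iff₀ hwx] at h1
      refine h1.trans (mul_le_mul_of_nonneg_right ?_ hwx.le)
      linarith [le_abs_self B]
  rw [hwdef] at hfin
  rw [mul_assoc]
  exact hfin
end
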